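/- arXiv:math/0305411 — 2 statements merged into one kernel-verified Lean document; each statement's English description precedes it below -/
import Mathlib

section
/- If K ⊂ ℝ² is a symmetric convex polygon with more than 4 vertices, then for every real p ≥ 1 and every integer N ≥ 2 one has the strict inequalities 𝔼 U_{K, N+1}^p < 𝔼 U_{𝒫, N+1}^p and 𝔼 V_{K, N}^p < 𝔼 V_{𝒫, N}^p, where 𝒫 is a symmetric parallelogram (the image of [-1,1]² under an invertible linear map). -/
open MeasureTheory Set

noncomputable section

variable {E : Type*} [NormedAddCommGroup E] [InnerProductSpace ℝ E]

/-- A symmetric convex body: a compact convex set with nonempty interior with `K = -K`. -/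
def IsSymConvexBody (K : Set E) : Prop :=
  IsCompact K ∧ Convex ℝ K ∧ (interior K).Nonempty ∧ K = -K

/-- `momentU n N K p = 𝔼 U_{K,N}^p`, the `p`-th moment of the normalized volume of the
convex hull of `N` independent uniform random points in `K ⊆ ℝⁿ`. -/
def momentU (n N : ℕ) (K : Set (EuclideanSpace ℝ (Fin n))) (p : ℝ) : ℝ :=
  (∫ x : Fin N → EuclideanSpace ℝ (Fin n) in {x | ∀ i, x i ∈ K},
      ((volume (convexHull ℝ (Set.range x))).toReal / (volume K).toReal) ^ p) /
    (volume K).toReal ^ N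

/-- `momentV n N K p = 𝔼 V_{K,N}^p`, the `p`-th moment of the normalized volume of the
symmetric convex hull `conv{±x₁, …, ±x_N}` of `N` independent uniform random points
in `K ⊆ ℝⁿ`. -/
def momentV (n N : ℕ) (K : Set (EuclideanSpace ℝ (Fin n))) (p : ℝ) : ℝ :=
  (∫ x : Fin N → EuclideanSpace ℝ (Fin n) in {x | ∀ i, x i ∈ K},
      ((volume (convexHull ℝ (Set.range x ∪ -Set.range x))).toReal / (volume K).toReal) ^ p) /
    (volume K).toReal ^ N

namespace PolyMoment

/-- General moment functional. -/
def Fm {V : Type*} [AddCommGroup V] [Module ℝ V] [MeasureSpace V] (n : ℕ) {J : Type}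
    (σ : J → Fin n) (ε : J → ℝ) (p : ℝ) (K : Set V) : ℝ :=
  (∫ x : Fin n → V in {x | ∀ i, x i ∈ K},
      ((volume (convexHull ℝ (Set.range fun j => ε j • x (σ j)))).toReal /
        (volume K).toReal) ^ p) / (volume K).toReal ^ n

lemma exists_scale {V W : Type*} [NormedAddCommGroup V] [NormedSpace ℝ V]
    [MeasureSpace V] [BorelSpace V] [FiniteDimensional ℝ V]
    [(volume : Measure V).IsAddHaarMeasure]
    [NormedAddCommGroup W] [NormedSpace ℝ W]
    [MeasureSpace W] [BorelSpace W] [FiniteDimensional ℝ W]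
    [(volume : Measure W).IsAddHaarMeasure] (e : V ≃L[ℝ] W) :
    ∃ c : ENNReal, c ≠ 0 ∧ c ≠ ⊤ ∧ (volume : Measure W) = c • Measure.map e volume := by
  have := e.isAddHaarMeasure_map (volume : Measure V)
  refine ⟨Measure.addHaarScalarFactor (volume : Measure W) (Measure.map e volume), ?_,
    ENNReal.coe_ne_top, ?_⟩
  · have := Measure.addHaarScalarFactor_pos_of_isAddHaarMeasure (volume : Measure W)
      (Measure.map e volume)
    exact_mod_cast this.ne'
  · exact Measure.isAddLeftInvariant_eq_smul _ _

lemma scale_image {V W : Type*} [NormedAddCommGroup V] [NormedSpace ℝ V]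
    [MeasureSpace V] [BorelSpace V] 
    [NormedAddCommGroup W] [NormedSpace ℝ W]
    [MeasureSpace W] [BorelSpace W] (e : V ≃L[ℝ] W) (c : ENNReal)
    (h : (volume : Measure W) = c • Measure.map e volume) (A : Set V) :
    volume (e '' A) = c * volume A := by
  have he : MeasurableEmbedding e := e.toHomeomorph.measurableEmbedding
  rw [h, Measure.smul_apply, he.map_apply, preimage_image_eq _ e.injective, smul_eq_mul]

lemma Fm_image {V W : Type*} [NormedAddCommGroup V] [NormedSpace ℝ V]
    [MeasureSpace V] [BorelSpace V] [FiniteDimensional ℝ V]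
    [(volume : Measure V).IsAddHaarMeasure]
    [NormedAddCommGroup W] [NormedSpace ℝ W]
    [MeasureSpace W] [BorelSpace W] [FiniteDimensional ℝ W]
    [(volume : Measure W).IsAddHaarMeasure] (e : V ≃L[ℝ] W)
    (n : ℕ) {J : Type} (σ : J → Fin n) (ε : J → ℝ) (p : ℝ) (K : Set V)
    (h0 : volume K ≠ 0) (hT : volume K ≠ ⊤) :
    Fm n σ ε p (e '' K) = Fm n σ ε p K := by
  obtain ⟨c, c0, cT, hc⟩ := exists_scale e
  let e' : (Fin n → V) ≃L[ℝ] (Fin n → W) := ContinuousLinearEquiv.piCongrRight fun _ => e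
  have e'app : ∀ x i, e' x i = e (x i) := fun x i => rfl
  obtain ⟨d, d0, dT, hd⟩ := exists_scale e'
  have hsetV : ∀ (A : Set V), {x : Fin n → V | ∀ i, x i ∈ A} = univ.pi fun _ => A := by
    intro A; ext x; simp
  have hsetW : ∀ (A : Set W), {x : Fin n → W | ∀ i, x i ∈ A} = univ.pi fun _ => A := by
    intro A; ext x; simp
  have him : e' '' {x | ∀ i, x i ∈ K} = {x | ∀ i, x i ∈ e '' K} := by
    ext x
    constructor
    · rintro ⟨y, hy, rfl⟩ i
      exact ⟨y i, hy i, rfl⟩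
    · intro h
      choose y hy hyx using h
      exact ⟨y, hy, funext hyx⟩
  have hdc : d = c ^ n := by
    have h1 := scale_image e' d hd {x | ∀ i, x i ∈ K}
    rw [him, hsetV, hsetW, volume_pi_pi, volume_pi_pi, scale_image e c hc] at h1
    simp only [Finset.prod_const, Finset.card_univ, Fintype.card_fin, mul_pow] at h1
    exact ((ENNReal.mul_left_inj (pow_ne_zero _ h0) (ENNReal.pow_ne_top hT)).1 h1).symm
  have hc0 : c.toReal ≠ 0 := ENNReal.toReal_ne_zero.2 ⟨c0, cT⟩
  unfold Fm
  have he' : MeasurableEmbedding e' := e'.toHomeomorph.measurableEmbedding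
  have hI : ∀ g : (Fin n → W) → ℝ, ∫ x in {x | ∀ i, x i ∈ e '' K}, g x =
      c.toReal ^ n * ∫ x in {x | ∀ i, x i ∈ K}, g (e' x) := by
    intro g
    rw [← him, hd, Measure.restrict_smul, integral_smul_measure,
      he'.setIntegral_map g, preimage_image_eq _ e'.injective, hdc,
      ENNReal.toReal_pow, smul_eq_mul]
  rw [hI]
  have : ∀ x : Fin n → V, volume (convexHull ℝ (range fun j => ε j • e' x (σ j))) =
      c * volume (convexHull ℝ (range fun j => ε j • x (σ j))) := by
    intro x
    rw [← scale_image e c hc]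
    congr 1
    have := LinearMap.image_convexHull (𝕜 := ℝ) (e : V →ₗ[ℝ] W) (range fun j => ε j • x (σ j))
    rw [← range_comp] at this
    refine Eq.trans ?_ this.symm
    congr 2
    ext j
    simp [e'app]
  simp only [this, scale_image e c hc, ENNReal.toReal_mul, mul_div_mul_left _ _ hc0, mul_pow]
  rw [mul_div_mul_left _ _ (pow_ne_zero _ hc0)]

lemma mem_hull_range {V : Type*} [AddCommGroup V] [Module ℝ V] {J : Type} [Fintype J] (z : J → V)
    (q : V) : q ∈ convexHull ℝ (range z) ↔ ∃ w ∈ stdSimplex ℝ J, ∑ j, w j • z j = q := by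
  classical
  have h := LinearMap.image_convexHull (𝕜 := ℝ) (Fintype.linearCombination ℝ z)
    (range fun i j : J => if i = j then (1:ℝ) else 0)
  rw [convexHull_basis_eq_stdSimplex, ← range_comp] at h
  have h2 : (⇑(Fintype.linearCombination ℝ z) ∘ fun i j : J => if i = j then (1:ℝ) else 0) = z := by
    ext i
    simp [Fintype.linearCombination_apply]
  rw [h2] at h
  rw [← h]
  simp [Fintype.linearCombination_apply]

lemma measurable_vol_hull {J : Type} [Finite J] :
    Measurable fun z : J → ℝ × ℝ => volume (convexHull ℝ (range z)) := by
  have := Fintype.ofFinite J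
  have hcl : IsClosed {q : (J → ℝ × ℝ) × (ℝ × ℝ) | q.2 ∈ convexHull ℝ (range q.1)} := by
    have hc : IsClosed {r : stdSimplex ℝ J × ((J → ℝ × ℝ) × (ℝ × ℝ)) |
        ∑ j, r.1.1 j • r.2.1 j = r.2.2} := by
      refine isClosed_eq ?_ (by fun_prop)
      refine continuous_finsetSum _ fun j _ => Continuous.fun_smul ?_ ?_
      · exact (continuous_apply j).comp (continuous_subtype_val.comp continuous_fst)
      · exact (continuous_apply j).comp (continuous_fst.comp continuous_snd)
    have : CompactSpace (stdSimplex ℝ J) := isCompact_iff_compactSpace.1 (isCompact_stdSimplex ℝ J)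
    convert isClosedMap_snd_of_compactSpace _ hc using 1
    ext q
    rw [mem_ofPred_eq, mem_hull_range]
    constructor
    · rintro ⟨w, hw, h⟩
      exact ⟨(⟨w, hw⟩, q), h, rfl⟩
    · rintro ⟨⟨w, q'⟩, h, rfl⟩
      exact ⟨w.1, w.2, h⟩
  exact measurable_measure_prodMk_left hcl.measurableSet

/-- piecewise linear odd speed -/
def bet (s : ℝ) : ℝ := max (s - 1) 0 - max (-s - 1) 0

lemma bet_neg (s : ℝ) : bet (-s) = - bet s := by
  unfold bet; ring_nf

lemma continuous_bet : Continuous bet := by unfold bet; fun_prop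

/-- the movement -/
def phi (t : ℝ) (q : ℝ × ℝ) : ℝ × ℝ := (q.1, q.2 + t * bet q.1)

lemma phi_zero : phi 0 = id := by ext q <;> simp [phi]

lemma phi_neg (t : ℝ) (q : ℝ × ℝ) : phi t (-q) = - phi t q := by
  ext <;> simp [phi, bet_neg]; ring

def phiH (t : ℝ) : (ℝ × ℝ) ≃ₜ (ℝ × ℝ) where
  toFun := phi t
  invFun := phi (-t)
  left_inv q := by ext <;> simp [phi]
  right_inv q := by ext <;> simp [phi]
  continuous_toFun := by have := continuous_bet; unfold phi; fun_prop
  continuous_invFun := by have := continuous_bet; unfold phi; fun_prop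

lemma phi_mp (t : ℝ) : MeasurePreserving (phi t) volume volume := by
  have := continuous_bet
  refine MeasurePreserving.skew_product (μa := volume) (μc := volume) (MeasurePreserving.id _)
    (g := fun s y => y + t * bet s) ?_ ?_
  · exact Continuous.measurable (by unfold Function.uncurry; fun_prop)
  · exact Filter.Eventually.of_forall fun s => (measurePreserving_add_right volume _).map_eq

lemma slice_convex {J : Type} [Finite J] (z : J → ℝ × ℝ) (a b μ ν : ℝ) (hμ : 0 ≤ μ) (hν : 0 ≤ ν)
    (hμν : μ + ν = 1) (hab : μ * a + ν * b = 0) (s : ℝ) :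
    volume (Prod.mk s ⁻¹' convexHull ℝ (range z)) ≤
      ENNReal.ofReal μ * volume (Prod.mk s ⁻¹' convexHull ℝ (range fun j => phi a (z j))) +
      ENNReal.ofReal ν * volume (Prod.mk s ⁻¹' convexHull ℝ (range fun j => phi b (z j))) := by
  have := Fintype.ofFinite J
  have key : ∀ (C : Set (ℝ × ℝ)), Convex ℝ C → ∀ x y, (s, x) ∈ C → (s, y) ∈ C →
      ENNReal.ofReal |x - y| ≤ volume (Prod.mk s ⁻¹' C) := by
    intro C hC x y hx hy
    rw [abs_sub_comm, ← Real.volume_interval]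
    refine measure_mono ?_
    intro r hr
    rw [← segment_eq_uIcc] at hr
    obtain ⟨α, β, hα, hβ, hαβ, rfl⟩ := hr
    have := hC hx hy hα hβ hαβ
    have e : α • (s, x) + β • (s, y) = (s, α • x + β • y) := by
      ext <;> simp [← add_mul, hαβ]
    rwa [e] at this
  refine (Real.volume_le_diam _).trans (Metric.ediam_le ?_)
  have hh : ∀ (w : J → ℝ) (x : ℝ), ∑ j, w j • z j = (s, x) → ∀ t,
      ∑ j, w j • phi t (z j) = (s, x + t * ∑ j, w j * bet (z j).1) := by
    intro w x hw t
    have h1 := congrArg Prod.fst hw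
    have h2 := congrArg Prod.snd hw
    ext
    · simpa [Prod.fst_sum, phi] using h1
    · simp only [Prod.snd_sum, phi, Prod.smul_snd, smul_eq_mul, mul_add, Finset.sum_add_distrib]
      simp only [Prod.snd_sum, Prod.smul_snd, smul_eq_mul] at h2
      rw [h2, Finset.mul_sum]
      congr 1
      exact Finset.sum_congr rfl fun j _ => by ring
  intro x hx y hy
  rw [mem_preimage, mem_hull_range] at hx hy
  obtain ⟨w, hw, hx⟩ := hx
  obtain ⟨w', hw', hy⟩ := hy
  set B := ∑ j, w j * bet (z j).1
  set B' := ∑ j, w' j * bet (z j).1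
  have ka := key _ (convex_convexHull ℝ (range fun j => phi a (z j))) (x + a * B) (y + a * B')
    ((mem_hull_range _ _).2 ⟨w, hw, hh w x hx a⟩) ((mem_hull_range _ _).2 ⟨w', hw', hh w' y hy a⟩)
  have kb := key _ (convex_convexHull ℝ (range fun j => phi b (z j))) (x + b * B) (y + b * B')
    ((mem_hull_range _ _).2 ⟨w, hw, hh w x hx b⟩) ((mem_hull_range _ _).2 ⟨w', hw', hh w' y hy b⟩)
  calc edist x y = ENNReal.ofReal |x - y| := by rw [edist_dist, Real.dist_eq]
    _ ≤ ENNReal.ofReal (μ * |(x + a * B) - (y + a * B')| + ν * |(x + b * B) - (y + b * B')|) := by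
      apply ENNReal.ofReal_le_ofReal
      have : x - y = μ * ((x + a * B) - (y + a * B')) + ν * ((x + b * B) - (y + b * B')) := by
        linear_combination (y - x) * hμν + (B' - B) * hab
      conv_lhs => rw [this]
      refine (abs_add_le _ _).trans ?_
      rw [abs_mul, abs_mul, abs_of_nonneg hμ, abs_of_nonneg hν]
    _ = ENNReal.ofReal μ * ENNReal.ofReal |(x + a * B) - (y + a * B')| +
        ENNReal.ofReal ν * ENNReal.ofReal |(x + b * B) - (y + b * B')| := by
      rw [ENNReal.ofReal_add (by positivity) (by positivity), ENNReal.ofReal_mul hμ,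
        ENNReal.ofReal_mul hν]
    _ ≤ _ := by gcongr

lemma vol_convex {J : Type} [Finite J] (z : J → ℝ × ℝ) (a b μ ν : ℝ) (hμ : 0 ≤ μ) (hν : 0 ≤ ν)
    (hμν : μ + ν = 1) (hab : μ * a + ν * b = 0) :
    volume (convexHull ℝ (range z)) ≤
      ENNReal.ofReal μ * volume (convexHull ℝ (range fun j => phi a (z j))) +
      ENNReal.ofReal ν * volume (convexHull ℝ (range fun j => phi b (z j))) := by
  have hm : ∀ z : J → ℝ × ℝ, MeasurableSet (convexHull ℝ (range z)) := fun z =>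
    ((finite_range z).isClosed_convexHull ℝ).measurableSet
  have hv : ∀ z : J → ℝ × ℝ, volume (convexHull ℝ (range z)) =
      ∫⁻ s : ℝ, volume (Prod.mk s ⁻¹' convexHull ℝ (range z)) := fun z =>
    Measure.prod_apply (hm z)
  have hme : ∀ z : J → ℝ × ℝ, Measurable fun s : ℝ => 
      volume (Prod.mk s ⁻¹' convexHull ℝ (range z)) := fun z => measurable_measure_prodMk_left (hm z)
  rw [hv, hv, hv, ← lintegral_const_mul _ (hme _), ← lintegral_const_mul _ (hme _),
    ← lintegral_add_left ((hme _).const_mul _)]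
  exact lintegral_mono fun s => slice_convex z a b μ ν hμ hν hμν hab s

lemma vol_hull_lt_top {J : Type} [Finite J] (z : J → ℝ × ℝ) :
    volume (convexHull ℝ (range z)) ≠ ⊤ :=
  ((finite_range z).isCompact_convexHull ℝ).measure_lt_top.ne

lemma vol_convex_real {J : Type} [Finite J] (z : J → ℝ × ℝ) (a b μ ν : ℝ) (hμ : 0 ≤ μ) (hν : 0 ≤ ν)
    (hμν : μ + ν = 1) (hab : μ * a + ν * b = 0) :
    (volume (convexHull ℝ (range z))).toReal ≤
      μ * (volume (convexHull ℝ (range fun j => phi a (z j)))).toReal +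
      ν * (volume (convexHull ℝ (range fun j => phi b (z j)))).toReal := by
  have h := vol_convex z a b μ ν hμ hν hμν hab
  have ha := vol_hull_lt_top fun j => phi a (z j)
  have hb := vol_hull_lt_top fun j => phi b (z j)
  have h2 := ENNReal.toReal_mono (by finiteness) h
  rw [ENNReal.toReal_add (by finiteness) (by finiteness), ENNReal.toReal_mul, ENNReal.toReal_mul,
    ENNReal.toReal_ofReal hμ, ENNReal.toReal_ofReal hν] at h2
  exact h2

lemma tri_lower {C : Set (ℝ × ℝ)} (hC : Convex ℝ C) {u v w : ℝ × ℝ} (hu : u ∈ C) (hv : v ∈ C)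
    (hw : w ∈ C) :
    ENNReal.ofReal (|(v.1 - u.1) * (w.2 - u.2) - (w.1 - u.1) * (v.2 - u.2)| / 4) ≤ volume C := by
  let M : Matrix (Fin 2) (Fin 2) ℝ := !![v.1 - u.1, w.1 - u.1; v.2 - u.2, w.2 - u.2]
  let f : (ℝ × ℝ) →ₗ[ℝ] (ℝ × ℝ) := Matrix.toLin (Module.Basis.finTwoProd ℝ) (Module.Basis.finTwoProd ℝ) M
  have hf : ∀ q : ℝ × ℝ, f q = (q.1 * (v.1 - u.1) + q.2 * (w.1 - u.1),
      q.1 * (v.2 - u.2) + q.2 * (w.2 - u.2)) := by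
    intro q
    simp only [f, M, Matrix.toLin_finTwoProd_apply]
    ext <;> simp <;> ring
  have hdet : LinearMap.det f = (v.1 - u.1) * (w.2 - u.2) - (w.1 - u.1) * (v.2 - u.2) := by
    simp [f, M, LinearMap.det_toLin, Matrix.det_fin_two]
  have h1 := Measure.addHaar_image_linearMap (volume : Measure (ℝ × ℝ)) f
    (Icc (0:ℝ) (1/2) ×ˢ Icc (0:ℝ) (1/2))
  have h2 : (volume : Measure (ℝ × ℝ)) (Icc (0:ℝ) (1/2) ×ˢ Icc (0:ℝ) (1/2)) = ENNReal.ofReal (1/4) := by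
    rw [Measure.volume_eq_prod, Measure.prod_prod, Real.volume_Icc, ← ENNReal.ofReal_mul (by norm_num)]
    norm_num
  rw [h2, ← ENNReal.ofReal_mul (abs_nonneg _), hdet] at h1
  rw [div_eq_mul_one_div, ← h1, ← measure_preimage_add volume u C]
  refine measure_mono ?_
  rintro _ ⟨⟨α, β⟩, ⟨⟨ha0, ha1⟩, hb0, hb1⟩, rfl⟩
  simp only at ha0 ha1 hb0 hb1
  rw [mem_preimage, hf]
  have h3 : (1 - α - β) • u + α • v + β • w ∈ C := by
    have := hC.sum_mem (t := Finset.univ) (w := ![1 - α - β, α, β]) (z := ![u, v, w])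
      (by intro i _; fin_cases i <;> simp <;> linarith) (by simp [Fin.sum_univ_three]; ring)
      (by intro i _; fin_cases i <;> simp [*])
    simpa [Fin.sum_univ_three] using this
  convert h3 using 1
  ext <;> simp <;> ring

lemma box_upper {J : Type} (z : J → ℝ × ℝ) (R δ : ℝ) (hR : 0 ≤ R) 
    (h1 : ∀ j, |(z j).1| ≤ R) (h2 : ∀ j, |(z j).2| ≤ δ) :
    volume (convexHull ℝ (range z)) ≤ ENNReal.ofReal (4 * R * δ) := by
  have : convexHull ℝ (range z) ⊆ Icc (-R) R ×ˢ Icc (-δ) δ := by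
    refine convexHull_min ?_ ((convex_Icc _ _).prod (convex_Icc _ _))
    rintro _ ⟨j, rfl⟩
    exact ⟨abs_le.1 (h1 j), abs_le.1 (h2 j)⟩
  refine (measure_mono this).trans ?_
  rw [Measure.volume_eq_prod, Measure.prod_prod, Real.volume_Icc, Real.volume_Icc,
    ← ENNReal.ofReal_mul (by linarith)]
  apply ENNReal.ofReal_le_ofReal
  apply le_of_eq; ring

lemma phi_eps (t : ℝ) {e : ℝ} (he : e = 1 ∨ e = -1) (q : ℝ × ℝ) : phi t (e • q) = e • phi t q := by
  rcases he with rfl | rfl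
  · simp
  · simp [phi_neg]

lemma vol_phi (t : ℝ) (K : Set (ℝ × ℝ)) : volume (phi t '' K) = volume K := by
  have := (phi_mp t).measure_preimage_emb (phiH t).measurableEmbedding (phi t '' K)
  rw [← this, preimage_image_eq _ (show Function.Injective (phi t) from (phiH t).injective)]

/-- integrand -/
def gg {n : ℕ} {J : Type} (σ : J → Fin n) (ε : J → ℝ) (t : ℝ) (x : Fin n → ℝ × ℝ) : ℝ :=
  (volume (convexHull ℝ (range fun j => phi t (ε j • x (σ j))))).toReal

lemma Fm_phi {n : ℕ} {J : Type} (σ : J → Fin n) (ε : J → ℝ) (hε : ∀ j, ε j = 1 ∨ ε j = -1)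
    (p t : ℝ) (K : Set (ℝ × ℝ)) :
    Fm n σ ε p (phi t '' K) = (∫ x : Fin n → ℝ × ℝ in {x | ∀ i, x i ∈ K},
      (gg σ ε t x / (volume K).toReal) ^ p) / (volume K).toReal ^ n := by
  unfold Fm gg
  rw [vol_phi]
  congr 1
  have hmp : MeasurePreserving (fun (x : Fin n → ℝ × ℝ) i => phi t (x i)) volume volume :=
    volume_preserving_pi fun _ => phi_mp t
  have hem : MeasurableEmbedding (fun (x : Fin n → ℝ × ℝ) i => phi t (x i)) :=
    (Homeomorph.piCongrRight fun _ : Fin n => phiH t).measurableEmbedding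
  rw [← hmp.setIntegral_preimage_emb hem]
  have : (fun (x : Fin n → ℝ × ℝ) i => phi t (x i)) ⁻¹' {x | ∀ i, x i ∈ phi t '' K} =
      {x | ∀ i, x i ∈ K} := by
    ext x
    exact forall_congr' fun i => (phiH t).injective.mem_set_image
  rw [this]
  simp only [phi_eps t (hε _)]

lemma measurable_gg {n : ℕ} {J : Type} [Finite J] (σ : J → Fin n) (ε : J → ℝ) (t : ℝ) :
    Measurable (gg σ ε t) := by
  refine (measurable_vol_hull.comp ?_).ennreal_toReal
  refine measurable_pi_lambda _ fun j => (phiH t).continuous.measurable.comp ?_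
  exact Continuous.measurable (by fun_prop)

lemma gg_le {n : ℕ} {J : Type} [Finite J] (σ : J → Fin n) (ε : J → ℝ)
    (hε : ∀ j, ε j = 1 ∨ ε j = -1) (t : ℝ) (K : Set (ℝ × ℝ)) (hKs : K = -K)
    (hT : volume K ≠ ⊤) (hc : Convex ℝ (phi t '' K)) (x : Fin n → ℝ × ℝ) (hx : ∀ i, x i ∈ K) :
    gg σ ε t x ≤ (volume K).toReal := by
  refine ENNReal.toReal_mono hT ?_
  rw [← vol_phi t K]
  refine measure_mono (convexHull_min ?_ hc)
  rintro _ ⟨j, rfl⟩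
  refine ⟨_, ?_, rfl⟩
  rcases hε j with h | h
  · simpa [h] using hx _
  · rw [h, neg_one_smul, ← mem_neg, ← hKs]
    exact hx _

lemma Fm_strict {n : ℕ} {J : Type} [Finite J] (σ : J → Fin n) (ε : J → ℝ)
    (hε : ∀ j, ε j = 1 ∨ ε j = -1) (p : ℝ) (hp : 1 ≤ p) (K : Set (ℝ × ℝ)) (hKc : IsCompact K)
    (hKs : K = -K) (hKconv : Convex ℝ K) (h0 : volume K ≠ 0) (a b : ℝ) (ha : a < 0) (hb : 0 < b)
    (hca : Convex ℝ (phi a '' K)) (hcb : Convex ℝ (phi b '' K)) (x₀ : Fin n → ℝ × ℝ)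
    (hx₀ : ∀ i, x₀ i ∈ interior K) (hy₀ : ∀ i, (x₀ i).2 = 0) (j₁ j₂ j₃ : J)
    (hj₁ : ε j₁ * (x₀ (σ j₁)).1 = 1/2) (hj₂ : ε j₂ * (x₀ (σ j₂)).1 = -1/2)
    (hj₃ : 1 < ε j₃ * (x₀ (σ j₃)).1) :
    Fm n σ ε p K < max (Fm n σ ε p (phi a '' K)) (Fm n σ ε p (phi b '' K)) := by
  have hT : volume K ≠ ⊤ := hKc.measure_lt_top.ne
  set vK := (volume K).toReal with hvK
  have hvK0 : 0 < vK := ENNReal.toReal_pos h0 hT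
  set A : Set (Fin n → ℝ × ℝ) := {x | ∀ i, x i ∈ K} with hA
  have hApi : A = univ.pi fun _ => K := by ext x; simp [hA]
  have hAm : MeasurableSet A := by
    rw [hApi]; exact MeasurableSet.univ_pi fun _ => hKc.measurableSet
  have hAf : volume A ≠ ⊤ := by
    rw [hApi, volume_pi_pi]; simpa using ENNReal.pow_ne_top hT
  have hK0 : Convex ℝ (phi 0 '' K) := by rwa [phi_zero, image_id]
  have hF0 : Fm n σ ε p K = Fm n σ ε p (phi 0 '' K) := by rw [phi_zero, image_id]
  set h : ℝ → (Fin n → ℝ × ℝ) → ℝ := fun t x => (gg σ ε t x / vK) ^ p with hh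
  have hggnn : ∀ t x, 0 ≤ gg σ ε t x := fun t x => ENNReal.toReal_nonneg
  have hint : ∀ t, Convex ℝ (phi t '' K) → IntegrableOn (h t) A := by
    intro t hc
    refine Measure.integrableOn_of_bounded hAf ?_ (M := 1) ?_
    · exact (((measurable_gg σ ε t).div_const _).pow_const _).aestronglyMeasurable
    · refine (ae_restrict_iff' hAm).2 (Filter.Eventually.of_forall fun x hx => ?_)
      have hle := gg_le σ ε hε t K hKs hT hc x hx
      have hd : 0 ≤ gg σ ε t x / vK := div_nonneg (hggnn t x) hvK0.le
      rw [Real.norm_of_nonneg (Real.rpow_nonneg hd _)]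
      exact Real.rpow_le_one hd ((div_le_one hvK0).2 hle) (by linarith)
  set μ := b / (b - a) with hμ
  set ν := -a / (b - a) with hν
  have hba : 0 < b - a := by linarith
  have hμ0 : 0 < μ := by positivity
  have hν0 : 0 < ν := div_pos (by linarith) hba
  have hμν : μ + ν = 1 := by rw [hμ, hν]; field_simp; ring
  have hab : μ * a + ν * b = 0 := by rw [hμ, hν]; field_simp; ring
  have hconv : ∀ x, gg σ ε 0 x ≤ μ * gg σ ε a x + ν * gg σ ε b x := by
    intro x
    have := vol_convex_real (fun j => ε j • x (σ j)) a b μ ν hμ0.le hν0.le hμν hab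
    simpa [gg, phi_zero] using this
  have hpw : ∀ x, (μ * (gg σ ε a x / vK) + ν * (gg σ ε b x / vK)) ^ p ≤ μ * h a x + ν * h b x := by
    intro x
    exact (convexOn_rpow hp).2 (div_nonneg (hggnn a x) hvK0.le) (div_nonneg (hggnn b x) hvK0.le)
      hμ0.le hν0.le hμν
  set D : (Fin n → ℝ × ℝ) → ℝ := fun x => μ * h a x + ν * h b x - h 0 x with hD
  have hDnn : 0 ≤ D := by
    intro x
    refine sub_nonneg.2 (le_trans ?_ (hpw x))
    refine Real.rpow_le_rpow (div_nonneg (hggnn 0 x) hvK0.le) ?_ (by linarith)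
    rw [← mul_div_assoc, ← mul_div_assoc, ← add_div]
    exact div_le_div_of_nonneg_right (hconv x) hvK0.le
  have hDint : IntegrableOn D A :=
    (((hint a hca).const_mul μ).add ((hint b hcb).const_mul ν)).sub (hint 0 hK0)
  obtain ⟨R, hR0, hR⟩ : ∃ R : ℝ, 0 ≤ R ∧ ∀ q ∈ K, |q.1| ≤ R := by
    obtain ⟨R, hR⟩ := hKc.isBounded.exists_norm_le
    refine ⟨max R 0, le_max_right _ _, fun q hq => ?_⟩
    exact (norm_fst_le q).trans ((hR q hq).trans (le_max_left _ _))
  let Q : (Fin n → ℝ × ℝ) → J → ℝ × ℝ := fun x j => phi a (ε j • x (σ j))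
  let dt : (Fin n → ℝ × ℝ) → ℝ := fun x => ((Q x j₂).1 - (Q x j₁).1) * ((Q x j₃).2 - (Q x j₁).2) -
    ((Q x j₃).1 - (Q x j₁).1) * ((Q x j₂).2 - (Q x j₁).2)
  have hQc : ∀ j, Continuous fun x => Q x j := fun j =>
    (phiH a).continuous.comp (by fun_prop)
  have hdtc : Continuous dt := by
    have h1 := hQc j₁; have h2 := hQc j₂; have h3 := hQc j₃
    fun_prop
  let U : Set (Fin n → ℝ × ℝ) := (univ.pi fun _ => interior K) ∩
    {x | 4 * R * ∑ i, |(x i).2| < μ * (|dt x| / 4)}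
  have hUo : IsOpen U := by
    refine (isOpen_set_pi finite_univ fun _ _ => isOpen_interior).inter (isOpen_lt ?_ ?_)
    · fun_prop
    · fun_prop
  have hx₀U : x₀ ∈ U := by
    refine ⟨fun i _ => hx₀ i, ?_⟩
    have hQ1 : ∀ j, (Q x₀ j).1 = ε j * (x₀ (σ j)).1 := fun j => by simp [Q, phi]
    have hQ2 : ∀ j, (Q x₀ j).2 = a * bet (ε j * (x₀ (σ j)).1) := fun j => by simp [Q, phi, hy₀]
    have hb1 : bet (1/2) = 0 := by norm_num [bet]
    have hb2 : bet (-1/2) = 0 := by norm_num [bet]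
    have hb3 : 0 < bet (ε j₃ * (x₀ (σ j₃)).1) := by
      unfold bet
      rw [max_eq_left (by linarith), max_eq_right (by linarith)]; linarith
    have hdt : dt x₀ ≠ 0 := by
      simp only [dt, hQ1, hQ2, hj₁, hj₂, hb1, hb2]
      have := mul_neg_of_neg_of_pos ha hb3
      intro h; linarith
    have : 0 < |dt x₀| := abs_pos.2 hdt
    simp only [mem_ofPred_eq, hy₀, abs_zero, Finset.sum_const_zero, mul_zero]
    positivity
  have hUsub : U ⊆ Function.support D ∩ A := by
    rintro x ⟨hx1, hx2⟩
    have hxA : ∀ i, x i ∈ K := fun i => interior_subset (hx1 i (mem_univ i))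
    refine ⟨?_, hxA⟩
    have habs : ∀ j (r : ℝ), |ε j * r| = |r| := fun j r => by
      rcases hε j with h | h <;> simp [h]
    have hup : gg σ ε 0 x ≤ 4 * R * ∑ i, |(x i).2| := by
      have hb := box_upper (fun j => phi 0 (ε j • x (σ j))) R (∑ i, |(x i).2|) hR0
        (fun j => by simpa [phi_zero, habs] using hR _ (hxA _))
        (fun j => by
          simp only [phi_zero, id, Prod.smul_snd, smul_eq_mul, habs]
          exact Finset.single_le_sum (f := fun i => |(x i).2|) (fun i _ => abs_nonneg _)
            (Finset.mem_univ (σ j)))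
      refine ENNReal.toReal_le_of_le_ofReal ?_ hb
      have : 0 ≤ ∑ i, |(x i).2| := Finset.sum_nonneg fun i _ => abs_nonneg _
      positivity
    have hlo : |dt x| / 4 ≤ gg σ ε a x := by
      have := tri_lower (convex_convexHull ℝ (range (Q x))) (subset_convexHull ℝ _ (mem_range_self j₁))
        (subset_convexHull ℝ _ (mem_range_self j₂)) (subset_convexHull ℝ _ (mem_range_self j₃))
      exact (ENNReal.ofReal_le_iff_le_toReal (vol_hull_lt_top _)).1 this
    have hst : gg σ ε 0 x < μ * gg σ ε a x + ν * gg σ ε b x := by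
      have h1 : μ * (|dt x| / 4) ≤ μ * gg σ ε a x := by gcongr
      have h2 : 0 ≤ ν * gg σ ε b x := mul_nonneg hν0.le (hggnn b x)
      have h3 : 4 * R * ∑ i, |(x i).2| < μ * (|dt x| / 4) := hx2
      linarith
    have : 0 < D x := by
      refine sub_pos.2 (lt_of_lt_of_le ?_ (hpw x))
      refine Real.rpow_lt_rpow (div_nonneg (hggnn 0 x) hvK0.le) ?_ (by linarith)
      rw [← mul_div_assoc, ← mul_div_assoc, ← add_div]
      exact div_lt_div_of_pos_right hst hvK0
    exact this.ne'
  have hpos : 0 < ∫ x in A, D x := by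
    rw [integral_pos_iff_support_of_nonneg hDnn hDint, Measure.restrict_apply' hAm]
    exact (hUo.measure_pos volume ⟨x₀, hx₀U⟩).trans_le (measure_mono hUsub)
  have hI : ∫ x in A, D x = μ * (∫ x in A, h a x) + ν * (∫ x in A, h b x) - ∫ x in A, h 0 x := by
    rw [← integral_const_mul, ← integral_const_mul,
      ← integral_add ((hint a hca).const_mul μ) ((hint b hcb).const_mul ν)]
    exact integral_sub (((hint a hca).const_mul μ).add ((hint b hcb).const_mul ν)) (hint 0 hK0)
  rw [hF0, Fm_phi σ ε hε, Fm_phi σ ε hε, Fm_phi σ ε hε]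
  change (∫ x in A, h 0 x) / vK ^ n < max ((∫ x in A, h a x) / vK ^ n) ((∫ x in A, h b x) / vK ^ n)
  by_contra hcon
  rw [not_lt, max_le_iff] at hcon
  have hvn : 0 < vK ^ n := pow_pos hvK0 n
  have h1 := (div_le_div_iff_of_pos_right hvn).1 hcon.1
  have h2 := (div_le_div_iff_of_pos_right hvn).1 hcon.2
  have h3 := mul_le_mul_of_nonneg_left h1 hμ0.le
  have h4 := mul_le_mul_of_nonneg_left h2 hν0.le
  have h5 : (μ + ν) * ∫ x in A, h 0 x = ∫ x in A, h 0 x := by rw [hμν, one_mul]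
  rw [add_mul] at h5
  linarith

/-- cutting condition at abscissa one -/
structure CutOK (T : Set (ℝ × ℝ)) : Prop where
  v : ((1, 1) : ℝ × ℝ) ∈ T
  w : ((1, -1) : ℝ × ℝ) ∈ T
  z : ∃ z ∈ T, 1 < z.1
  cross : ∀ p ∈ T, ∀ q ∈ T, p.1 ≤ 1 → 1 ≤ q.1 →
    |p.2 * (q.1 - 1) + q.2 * (1 - p.1)| ≤ q.1 - p.1

lemma convex_cross_left (q : ℝ × ℝ) :
    Convex ℝ {p : ℝ × ℝ | |p.2 * (q.1 - 1) + q.2 * (1 - p.1)| ≤ q.1 - p.1} := by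
  intro x hx y hy α β hα hβ hαβ
  simp only [mem_ofPred_eq, abs_le, Prod.snd_add, Prod.fst_add, Prod.smul_fst, Prod.smul_snd,
    smul_eq_mul] at *
  obtain rfl : β = 1 - α := by linarith
  constructor
  · nlinarith [mul_le_mul_of_nonneg_left hx.1 hα, mul_le_mul_of_nonneg_left hy.1 hβ]
  · nlinarith [mul_le_mul_of_nonneg_left hx.2 hα, mul_le_mul_of_nonneg_left hy.2 hβ]

lemma convex_cross_right (p : ℝ × ℝ) :
    Convex ℝ {q : ℝ × ℝ | |p.2 * (q.1 - 1) + q.2 * (1 - p.1)| ≤ q.1 - p.1} := by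
  intro x hx y hy α β hα hβ hαβ
  simp only [mem_ofPred_eq, abs_le, Prod.snd_add, Prod.fst_add, Prod.smul_fst, Prod.smul_snd,
    smul_eq_mul] at *
  obtain rfl : β = 1 - α := by linarith
  constructor
  · nlinarith [mul_le_mul_of_nonneg_left hx.1 hα, mul_le_mul_of_nonneg_left hy.1 hβ]
  · nlinarith [mul_le_mul_of_nonneg_left hx.2 hα, mul_le_mul_of_nonneg_left hy.2 hβ]

lemma convex_fst_le (c : ℝ) : Convex ℝ {q : ℝ × ℝ | q.1 ≤ c} :=
  (convex_Iic c).linear_preimage (LinearMap.fst ℝ ℝ ℝ)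

lemma convex_fst_ge (c : ℝ) : Convex ℝ {q : ℝ × ℝ | c ≤ q.1} :=
  (convex_Ici c).linear_preimage (LinearMap.fst ℝ ℝ ℝ)

lemma vert_mem {C : Set (ℝ × ℝ)} (hC : Convex ℝ C) (h1 : ((1, 1) : ℝ × ℝ) ∈ C)
    (h2 : ((1, -1) : ℝ × ℝ) ∈ C) {y : ℝ} (hy : |y| ≤ 1) : ((1, y) : ℝ × ℝ) ∈ C := by
  rw [abs_le] at hy
  have := hC h1 h2 (a := (1 + y) / 2) (b := (1 - y) / 2) (by linarith) (by linarith) (by ring)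
  convert this using 1
  ext <;> simp <;> ring

lemma cut {T : Set (ℝ × ℝ)} (h : CutOK T) :
    convexHull ℝ T ⊆ convexHull ℝ (T ∩ {q | q.1 ≤ 1}) ∪ convexHull ℝ (T ∩ {q | 1 ≤ q.1}) := by
  set A := convexHull ℝ (T ∩ {q | q.1 ≤ 1}) with hA
  set B := convexHull ℝ (T ∩ {q | 1 ≤ q.1}) with hB
  have hAc : Convex ℝ A := convex_convexHull _ _
  have hBc : Convex ℝ B := convex_convexHull _ _
  have vA : ((1, 1) : ℝ × ℝ) ∈ A := subset_convexHull _ _ ⟨h.v, le_refl (1:ℝ)⟩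
  have wA : ((1, -1) : ℝ × ℝ) ∈ A := subset_convexHull _ _ ⟨h.w, le_refl (1:ℝ)⟩
  have vB : ((1, 1) : ℝ × ℝ) ∈ B := subset_convexHull _ _ ⟨h.v, le_refl (1:ℝ)⟩
  have wB : ((1, -1) : ℝ × ℝ) ∈ B := subset_convexHull _ _ ⟨h.w, le_refl (1:ℝ)⟩
  have hA1 : ∀ x ∈ A, x.1 ≤ 1 := fun x hx =>
    convexHull_min inter_subset_right (convex_fst_le 1) hx
  have hB1 : ∀ x ∈ B, 1 ≤ x.1 := fun x hx =>
    convexHull_min inter_subset_right (convex_fst_ge 1) hx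
  have hAB : ∀ x ∈ A, ∀ y ∈ B, |x.2 * (y.1 - 1) + y.2 * (1 - x.1)| ≤ y.1 - x.1 := by
    intro x hx y hy
    refine convexHull_min ?_ (convex_cross_left y) hx
    intro p hp
    refine convexHull_min ?_ (convex_cross_right p) hy
    intro q hq
    exact h.cross p hp.1 q hq.1 hp.2 hq.2
  obtain ⟨z, hz, hz1⟩ := h.z
  have hzB : z ∈ B := subset_convexHull _ _ ⟨hz, hz1.le⟩
  have hA2 : ∀ x ∈ A, x.1 = 1 → x ∈ B := by
    intro x hx hx1
    have h1 := hAB x hx z hzB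
    rw [hx1, sub_self, mul_zero, add_zero, abs_mul, abs_of_pos (by linarith : 0 < z.1 - 1)] at h1
    have : |x.2| ≤ 1 := by nlinarith
    have := vert_mem hBc vB wB this
    rwa [← hx1] at this
  have hseg : ∀ x ∈ A, ∀ y ∈ B, segment ℝ x y ⊆ A ∪ B := by
    intro x hx y hy
    have hx1 := hA1 x hx
    have hy1 := hB1 y hy
    rcases eq_or_lt_of_le hx1 with he | hlt
    · exact (hBc.segment_subset (hA2 x hx he) hy).trans subset_union_right
    · have hpos : 0 < y.1 - x.1 := by linarith
      set c := (x.2 * (y.1 - 1) + y.2 * (1 - x.1)) / (y.1 - x.1) with hc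
      have hcabs : |c| ≤ 1 := by
        rw [hc, abs_div, abs_of_pos hpos]
        exact (div_le_one hpos).2 (hAB x hx y hy)
      have cA := vert_mem hAc vA wA hcabs
      have cB := vert_mem hBc vB wB hcabs
      rintro u ⟨α, β, hα, hβ, hαβ, rfl⟩
      obtain rfl : α = 1 - β := by linarith
      have hcm : c * (y.1 - x.1) = x.2 * (y.1 - 1) + y.2 * (1 - x.1) := by
        rw [hc]; field_simp
      rcases le_total (β * (y.1 - x.1)) (1 - x.1) with hcase | hcase
      · left
        have h1x : 0 < 1 - x.1 := by linarith
        have := hAc hx cA (a := 1 - β * (y.1 - x.1) / (1 - x.1)) (b := β * (y.1 - x.1) / (1 - x.1))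
          (sub_nonneg.2 ((div_le_one h1x).2 hcase)) (by positivity) (by ring)
        convert this using 1
        ext
        · simp; field_simp; ring
        · simp; field_simp; linear_combination (-β) * hcm
      · right
        rcases eq_or_lt_of_le hy1 with he | hlt'
        · have hβ1 : β = 1 := by
            rw [← he] at hcase
            have : 0 < 1 - x.1 := by linarith
            nlinarith
          rw [hβ1]
          simpa using hy
        · have h1y : 0 < y.1 - 1 := by linarith
          have := hBc cB hy (a := (1 - β) * (y.1 - x.1) / (y.1 - 1))
            (b := 1 - (1 - β) * (y.1 - x.1) / (y.1 - 1))
            (by positivity) (sub_nonneg.2 ((div_le_one h1y).2 (by linarith))) (by ring)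
          convert this using 1
          ext
          · simp; field_simp; ring
          · simp; field_simp; linear_combination (β - 1) * hcm
  have hconv : Convex ℝ (A ∪ B) := by
    rw [convex_iff_segment_subset]
    rintro x (hx | hx) y (hy | hy)
    · exact (hAc.segment_subset hx hy).trans subset_union_left
    · exact hseg x hx y hy
    · rw [segment_symm]; exact hseg y hy x hx
    · exact (hBc.segment_subset hx hy).trans subset_union_right
  refine convexHull_min ?_ hconv
  intro q hq
  rcases le_total q.1 1 with h1 | h1
  · exact Or.inl (subset_convexHull _ _ ⟨hq, h1⟩)
  · exact Or.inr (subset_convexHull _ _ ⟨hq, h1⟩)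

lemma phi_hull_piece (t α β : ℝ) (A G : Set (ℝ × ℝ)) (hG : Convex ℝ G) (hAG : A ⊆ G)
    (hbet : ∀ q ∈ G, bet q.1 = α * q.1 + β) :
    phi t '' convexHull ℝ A ⊆ convexHull ℝ (phi t '' A) := by
  have hc : Convex ℝ (G ∩ phi t ⁻¹' convexHull ℝ (phi t '' A)) := by
    rintro x ⟨hx, hx'⟩ y ⟨hy, hy'⟩ a b ha hb hab
    have hm := hG hx hy ha hb hab
    refine ⟨hm, ?_⟩
    have := convex_convexHull ℝ (phi t '' A) hx' hy' ha hb hab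
    rw [mem_preimage]
    convert this using 1
    ext
    · simp [phi]
    · simp only [phi, hbet _ hm, hbet _ hx, hbet _ hy]
      simp
      obtain rfl : b = 1 - a := by linarith
      ring
  rintro _ ⟨q, hq, rfl⟩
  have : A ⊆ G ∩ phi t ⁻¹' convexHull ℝ (phi t '' A) := fun q hq =>
    ⟨hAG hq, subset_convexHull _ _ (mem_image_of_mem _ hq)⟩
  exact (convexHull_min this hc hq).2

lemma neg_phi_image (t : ℝ) (A : Set (ℝ × ℝ)) : phi t '' (-A) = -(phi t '' A) := by
  ext q
  simp only [mem_image, mem_neg]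
  constructor
  · rintro ⟨x, hx, rfl⟩
    exact ⟨-x, hx, phi_neg t x⟩
  · rintro ⟨x, hx, h⟩
    exact ⟨-x, by simpa using hx, by rw [phi_neg, h, neg_neg]⟩

lemma phi_hull_sub (t : ℝ) {T : Set (ℝ × ℝ)} (h : CutOK T) (hs : T = -T) :
    phi t '' convexHull ℝ T ⊆ convexHull ℝ (phi t '' T) := by
  have hR : phi t '' convexHull ℝ (T ∩ {q | 1 ≤ q.1}) ⊆ convexHull ℝ (phi t '' T) := by
    refine (phi_hull_piece t 1 (-1) _ _ (convex_fst_ge 1) inter_subset_right ?_).trans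
      (convexHull_mono (image_mono inter_subset_left))
    intro q hq
    have hq : 1 ≤ q.1 := hq
    unfold bet
    rw [max_eq_left (by linarith), max_eq_right (by linarith)]; ring
  have hM : phi t '' convexHull ℝ ((T ∩ {q | -1 ≤ q.1}) ∩ {q | q.1 ≤ 1}) ⊆
      convexHull ℝ (phi t '' T) := by
    refine (phi_hull_piece t 0 0 _ ({q | -1 ≤ q.1} ∩ {q | q.1 ≤ 1})
      ((convex_fst_ge (-1)).inter (convex_fst_le 1)) ?_ ?_).trans
      (convexHull_mono (image_mono ?_))
    · rw [inter_assoc]; exact inter_subset_right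
    · rintro q ⟨hq1, hq2⟩
      have hq1 : -1 ≤ q.1 := hq1
      have hq2 : q.1 ≤ 1 := hq2
      unfold bet
      rw [max_eq_right (by linarith), max_eq_right (by linarith)]; ring
    · rw [inter_assoc]; exact inter_subset_left
  have h' : CutOK (T ∩ {q | -1 ≤ q.1}) := by
    obtain ⟨z, hz, hz1⟩ := h.z
    exact ⟨⟨h.v, by simp⟩, ⟨h.w, by simp⟩, ⟨z, ⟨hz, by simp; linarith⟩, hz1⟩,
      fun p hp q hq => h.cross p hp.1 q hq.1⟩
  have hMR : phi t '' convexHull ℝ (T ∩ {q | -1 ≤ q.1}) ⊆ convexHull ℝ (phi t '' T) := by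
    refine (image_mono (cut h')).trans ?_
    rw [image_union]
    refine union_subset hM ((image_mono (convexHull_mono ?_)).trans hR)
    intro q hq
    exact ⟨hq.1.1, hq.2⟩
  have hL : phi t '' convexHull ℝ (T ∩ {q | q.1 ≤ 1}) ⊆ convexHull ℝ (phi t '' T) := by
    have e : T ∩ {q | q.1 ≤ 1} = -(T ∩ {q | -1 ≤ q.1}) := by
      rw [inter_neg, ← hs]
      congr 1
      ext q
      simp
    rw [e, convexHull_neg, neg_phi_image]
    have e2 : convexHull ℝ (phi t '' T) = -convexHull ℝ (phi t '' T) := by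
      rw [← convexHull_neg, ← neg_phi_image, ← hs]
    rw [e2, neg_subset_neg]
    exact hMR
  refine (image_mono (cut h)).trans ?_
  rw [image_union]
  exact union_subset hL hR

lemma phi_phi (t : ℝ) (T : Set (ℝ × ℝ)) : phi (-t) '' (phi t '' T) = T := by
  rw [image_image]
  convert image_id T using 2
  ext q <;> simp [phi]

lemma phi_phi' (t : ℝ) (T : Set (ℝ × ℝ)) : phi t '' (phi (-t) '' T) = T := by
  simpa using phi_phi (-t) T

lemma phi_hull (t : ℝ) {T : Set (ℝ × ℝ)} (h : CutOK T) (h' : CutOK (phi t '' T)) (hs : T = -T) :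
    phi t '' convexHull ℝ T = convexHull ℝ (phi t '' T) := by
  refine (phi_hull_sub t h hs).antisymm ?_
  have := phi_hull_sub (-t) h' (by rw [← neg_phi_image, ← hs])
  rw [phi_phi] at this
  have := image_mono (f := phi t) this
  rwa [phi_phi'] at this

lemma ext_vert {K : Set (ℝ × ℝ)} {e y : ℝ} (he : e = 1 ∨ e = -1)
    (hv : ((1, e) : ℝ × ℝ) ∈ extremePoints ℝ K) (hw : ((1, -e) : ℝ × ℝ) ∈ K)
    (hy : ((1, y) : ℝ × ℝ) ∈ K) : e * y ≤ 1 := by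
  by_contra hlt
  push Not at hlt
  have hee : e * e = 1 := by rcases he with rfl | rfl <;> norm_num
  have hm : ((1, e) : ℝ × ℝ) ∈ openSegment ℝ ((1, y) : ℝ × ℝ) (1, -e) := by
    refine ⟨2 / (e * y + 1), (e * y - 1) / (e * y + 1), div_pos (by norm_num) (by linarith),
      div_pos (by linarith) (by linarith), ?_, ?_⟩
    · have : e * y + 1 ≠ 0 := by linarith
      field_simp; ring
    · have : e * y + 1 ≠ 0 := by linarith
      ext
      · simp; field_simp; ring
      · simp; field_simp; rcases he with rfl | rfl <;> ring
  have := hv.2 hy hw hm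
  have := congrArg Prod.snd this
  simp only at this
  rw [this] at hlt
  linarith

lemma cross_seg {p q : ℝ × ℝ} (hp : p.1 < 1) (hq : 1 < q.1) :
    ((1, (p.2 * (q.1 - 1) + q.2 * (1 - p.1)) / (q.1 - p.1)) : ℝ × ℝ) ∈ openSegment ℝ p q := by
  have hpos : 0 < q.1 - p.1 := by linarith
  refine ⟨(q.1 - 1) / (q.1 - p.1), (1 - p.1) / (q.1 - p.1), div_pos (by linarith) hpos,
    div_pos (by linarith) hpos, by field_simp; ring, ?_⟩
  ext
  · simp; field_simp; ring
  · simp; field_simp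

lemma ext_cross {K : Set (ℝ × ℝ)} (hK : Convex ℝ K) {e : ℝ} (he : e = 1 ∨ e = -1)
    (hv : ((1, e) : ℝ × ℝ) ∈ extremePoints ℝ K) (hw : ((1, -e) : ℝ × ℝ) ∈ K)
    {p q : ℝ × ℝ} (hpK : p ∈ K) (hqK : q ∈ K) (hp : p.1 < 1) (hq : 1 < q.1) :
    0 < (q.1 - p.1) - e * (p.2 * (q.1 - 1) + q.2 * (1 - p.1)) := by
  have hpos : 0 < q.1 - p.1 := by linarith
  have hs := cross_seg hp hq
  set y := (p.2 * (q.1 - 1) + q.2 * (1 - p.1)) / (q.1 - p.1) with hy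
  have hyK := hK.openSegment_subset hpK hqK hs
  have hle := ext_vert he hv hw hyK
  have hym : p.2 * (q.1 - 1) + q.2 * (1 - p.1) = y * (q.1 - p.1) := by rw [hy]; field_simp
  have hne : e * y ≠ 1 := by
    intro h
    have : y = e := by rcases he with rfl | rfl <;> linarith
    rw [this] at hs
    have h1 := hv.2 hpK hqK hs
    rw [h1] at hp
    simp at hp
  have hlt := lt_of_le_of_ne hle hne
  rw [hym]
  nlinarith

lemma gap {S : Set (ℝ × ℝ)} (hS : S.Finite) (hm : ((-1, 1) : ℝ × ℝ) ∈ S) (hz : ∃ z ∈ S, 1 < z.1)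
    (D : ℝ × ℝ → ℝ × ℝ → ℝ) (hD : ∀ p ∈ S, ∀ q ∈ S, p.1 < 1 → 1 < q.1 → 0 < D p q) :
    ∃ b : ℝ, 0 < b ∧ (∀ p ∈ S, ∀ q ∈ S, -1 ≤ p.1 → p.1 < 1 → 1 < q.1 →
      b * ((q.1 - 1) * (1 - p.1)) ≤ D p q) ∧
      ∃ p ∈ S, ∃ q ∈ S, -1 ≤ p.1 ∧ p.1 < 1 ∧ 1 < q.1 ∧ b * ((q.1 - 1) * (1 - p.1)) = D p q := by
  let Z : Set ((ℝ × ℝ) × (ℝ × ℝ)) := (S ×ˢ S) ∩ {x | -1 ≤ x.1.1 ∧ x.1.1 < 1 ∧ 1 < x.2.1}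
  have hZ : Z.Finite := (hS.prod hS).inter_of_left _
  obtain ⟨z, hz, hz1⟩ := hz
  have hne : Z.Nonempty := ⟨((-1, 1), z), ⟨hm, hz⟩, by norm_num, by norm_num, hz1⟩
  obtain ⟨x, ⟨⟨hx1, hx2⟩, hx3, hx4, hx5⟩, hmin⟩ := exists_min_image Z
    (fun x => D x.1 x.2 / ((x.2.1 - 1) * (1 - x.1.1))) hZ hne
  have hpos : ∀ p q : ℝ × ℝ, p.1 < 1 → 1 < q.1 → 0 < (q.1 - 1) * (1 - p.1) := fun p q h1 h2 =>
    mul_pos (by linarith) (by linarith)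
  refine ⟨D x.1 x.2 / ((x.2.1 - 1) * (1 - x.1.1)),
    div_pos (hD _ hx1 _ hx2 hx4 hx5) (hpos _ _ hx4 hx5), ?_, x.1, hx1, x.2, hx2, hx3, hx4, hx5, ?_⟩
  · intro p hp q hq h1 h2 h3
    rw [← le_div_iff₀ (hpos p q h2 h3)]
    exact hmin (p, q) ⟨⟨hp, hq⟩, h1, h2, h3⟩
  · exact div_mul_cancel₀ _ (hpos _ _ hx4 hx5).ne'

lemma cutOK_phi {S : Set (ℝ × ℝ)} (hs : S = -S) (hv : ((1, 1) : ℝ × ℝ) ∈ S)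
    (hw : ((1, -1) : ℝ × ℝ) ∈ S) (hz : ∃ z ∈ S, 1 < z.1) (hone : ∀ p ∈ S, p.1 = 1 → |p.2| ≤ 1)
    (t : ℝ) (h1 : ∀ p ∈ S, ∀ q ∈ S, -1 ≤ p.1 → p.1 < 1 → 1 < q.1 →
      t * ((q.1 - 1) * (1 - p.1)) ≤ (q.1 - p.1) - 1 * (p.2 * (q.1 - 1) + q.2 * (1 - p.1)))
    (h2 : ∀ p ∈ S, ∀ q ∈ S, -1 ≤ p.1 → p.1 < 1 → 1 < q.1 →
      -t * ((q.1 - 1) * (1 - p.1)) ≤ (q.1 - p.1) - (-1) * (p.2 * (q.1 - 1) + q.2 * (1 - p.1))) :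
    CutOK (phi t '' S) := by
  have hneg : ∀ q ∈ S, -q ∈ S := fun q hq => by rw [hs] at hq; exact hq
  have bR : ∀ s : ℝ, 1 ≤ s → bet s = s - 1 := fun s hs => by
    unfold bet; rw [max_eq_left (by linarith), max_eq_right (by linarith)]; ring
  have bM : ∀ s : ℝ, -1 ≤ s → s ≤ 1 → bet s = 0 := fun s hs hs' => by
    unfold bet; rw [max_eq_right (by linarith), max_eq_right (by linarith)]; ring
  have mv : ((-1, -1) : ℝ × ℝ) ∈ S := by simpa using hneg _ hv
  have mw : ((-1, 1) : ℝ × ℝ) ∈ S := by simpa using hneg _ hw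
  have hqle : ∀ q ∈ S, 1 ≤ q.1 → |(phi t q).2| ≤ 1 := by
    intro q hq hq1
    simp only [phi, bR _ hq1]
    rcases eq_or_lt_of_le hq1 with he | hlt
    · simpa [← he] using hone q hq he.symm
    · have e1 := h1 _ mw q hq (by norm_num) (by norm_num) hlt
      have e2 := h2 _ mv q hq (by norm_num) (by norm_num) hlt
      simp only at e1 e2
      rw [abs_le]; constructor <;> linarith
  refine ⟨⟨_, hv, ?_⟩, ⟨_, hw, ?_⟩, ?_, ?_⟩
  · simp [phi, bet]
  · simp [phi, bet]
  · obtain ⟨z, hz, hz1⟩ := hz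
    exact ⟨_, mem_image_of_mem _ hz, hz1⟩
  · rintro _ ⟨p, hp, rfl⟩ _ ⟨q, hq, rfl⟩ hp1 hq1
    have hp1 : p.1 ≤ 1 := hp1
    have hq1 : 1 ≤ q.1 := hq1
    have hq2 := hqle q hq hq1
    have both : |(phi t p).2| ≤ 1 → |(phi t p).2 * ((phi t q).1 - 1) +
        (phi t q).2 * (1 - (phi t p).1)| ≤ (phi t q).1 - (phi t p).1 := by
      intro hp2
      rw [abs_le] at *
      change _ ≤ _ * (q.1 - 1) + _ * (1 - p.1) ∧ _ * (q.1 - 1) + _ * (1 - p.1) ≤ q.1 - p.1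
      change -(q.1 - p.1) ≤ _ ∧ _
      constructor <;> nlinarith
    rcases lt_or_ge p.1 (-1) with hl | hl
    · refine both ?_
      have := hqle (-p) (hneg p hp) (by simp; linarith)
      rw [phi_neg] at this
      simpa using this
    · have hpp : (phi t p).2 = p.2 := by simp [phi, bM _ hl hp1]
      rcases eq_or_lt_of_le hp1 with he | hlt
      · exact both (by rw [hpp]; exact hone p hp he)
      · rcases eq_or_lt_of_le hq1 with he' | hlt'
        · rw [hpp]
          simp only [phi] at hq2 ⊢
          rw [← he'] at hq2 ⊢
          rw [sub_self, mul_zero, zero_add, abs_mul, abs_of_pos (by linarith : 0 < 1 - p.1)]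
          nlinarith
        · have e1 := h1 p hp q hq hl hlt hlt'
          have e2 := h2 p hp q hq hl hlt hlt'
          rw [hpp]
          simp only [phi, bR _ hq1]
          rw [abs_le]; constructor <;> linarith

/-- symmetric planar polygon -/
def Good (K : Set (ℝ × ℝ)) : Prop :=
  (∃ S : Set (ℝ × ℝ), S.Finite ∧ K = convexHull ℝ S) ∧ K = -K ∧ volume K ≠ 0

lemma Good.convex {K : Set (ℝ × ℝ)} (h : Good K) : Convex ℝ K := by
  obtain ⟨⟨S, hS, rfl⟩, -⟩ := h; exact convex_convexHull _ _

lemma Good.compact {K : Set (ℝ × ℝ)} (h : Good K) : IsCompact K := by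
  obtain ⟨⟨S, hS, rfl⟩, -⟩ := h; exact hS.isCompact_convexHull ℝ

lemma Good.ext_finite {K : Set (ℝ × ℝ)} (h : Good K) : (extremePoints ℝ K).Finite := by
  obtain ⟨⟨S, hS, rfl⟩, -⟩ := h; exact hS.subset extremePoints_convexHull_subset

lemma Good.hull_ext {K : Set (ℝ × ℝ)} (h : Good K) : convexHull ℝ (extremePoints ℝ K) = K := by
  rw [← (h.ext_finite.isClosed_convexHull ℝ).closure_eq]
  exact closure_convexHull_extremePoints h.compact h.convex

lemma Good.neg_mem {K : Set (ℝ × ℝ)} (h : Good K) {x : ℝ × ℝ} (hx : x ∈ K) : -x ∈ K := by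
  rw [h.2.1] at hx; exact hx

lemma Good.neg_ext {K : Set (ℝ × ℝ)} (h : Good K) {x : ℝ × ℝ} (hx : x ∈ extremePoints ℝ K) :
    -x ∈ extremePoints ℝ K := by
  refine ⟨h.neg_mem hx.1, fun y hy z hz hm => ?_⟩
  have := hx.2 (h.neg_mem hy) (h.neg_mem hz) ?_
  · rw [← this, neg_neg]
  · obtain ⟨a, b, ha, hb, hab, e⟩ := hm
    refine ⟨a, b, ha, hb, hab, ?_⟩
    rw [← neg_neg x, ← e]; simp [add_comm]

lemma Good.ext_neg {K : Set (ℝ × ℝ)} (h : Good K) : extremePoints ℝ K = -extremePoints ℝ K := by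
  ext x
  exact ⟨fun hx => h.neg_ext hx, fun hx => by simpa using h.neg_ext hx⟩

lemma Good.image {K : Set (ℝ × ℝ)} (h : Good K) (e : (ℝ × ℝ) ≃L[ℝ] (ℝ × ℝ)) : Good (e '' K) := by
  obtain ⟨⟨S, hS, hK⟩, hs, h0⟩ := h
  refine ⟨⟨e '' S, hS.image _, ?_⟩, ?_, ?_⟩
  · rw [hK]; exact LinearMap.image_convexHull (e : (ℝ × ℝ) →ₗ[ℝ] (ℝ × ℝ)) S
  · conv_lhs => rw [hs]
    ext x
    simp only [mem_image, mem_neg]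
    constructor
    · rintro ⟨y, hy, rfl⟩; exact ⟨-y, hy, by simp⟩
    · rintro ⟨y, hy, hx⟩; exact ⟨-y, by simpa using hy, by simp [hx]⟩
  · obtain ⟨c, c0, cT, hc⟩ := exists_scale e
    rw [scale_image e c hc]
    exact mul_ne_zero c0 h0

lemma drop {K : Set (ℝ × ℝ)} (h : Good K) (t : ℝ)
    (hph : phi t '' K = convexHull ℝ (phi t '' extremePoints ℝ K))
    (v : ℝ × ℝ) (hv : v ∈ phi t '' extremePoints ℝ K) (p q : ℝ × ℝ) (hp : p ∈ phi t '' K)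
    (hq : q ∈ phi t '' K) (hvpq : v ∈ openSegment ℝ p q) (hne : p ≠ v) :
    Good (phi t '' K) ∧
      (extremePoints ℝ (phi t '' K)).ncard < (extremePoints ℝ K).ncard := by
  refine ⟨⟨⟨_, h.ext_finite.image _, hph⟩, ?_, ?_⟩, ?_⟩
  · rw [← neg_phi_image, ← h.2.1]
  · rw [vol_phi]; exact h.2.2
  · have hfin := h.ext_finite.image (phi t)
    refine (Set.ncard_lt_ncard ?_ hfin).trans_le (ncard_image_le h.ext_finite)
    refine ⟨?_, ?_⟩
    · rw [hph]; exact extremePoints_convexHull_subset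
    · intro hsub
      exact hne ((hsub hv).2 hp hq hvpq)

lemma step_norm {K : Set (ℝ × ℝ)} (h : Good K) (hv : ((1, 1) : ℝ × ℝ) ∈ extremePoints ℝ K)
    (hw : ((1, -1) : ℝ × ℝ) ∈ extremePoints ℝ K) (hz : ∃ z ∈ extremePoints ℝ K, 1 < z.1) :
    ∃ a b : ℝ, a < 0 ∧ 0 < b ∧
      (Good (phi a '' K) ∧ (extremePoints ℝ (phi a '' K)).ncard < (extremePoints ℝ K).ncard) ∧
      (Good (phi b '' K) ∧ (extremePoints ℝ (phi b '' K)).ncard < (extremePoints ℝ K).ncard) := by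
  set S := extremePoints ℝ K with hS
  have hSK : S ⊆ K := extremePoints_subset
  have hs : S = -S := h.ext_neg
  have mw : ((-1, 1) : ℝ × ℝ) ∈ S := by simpa using h.neg_ext hw
  have D1 : ∀ p ∈ S, ∀ q ∈ S, p.1 < 1 → 1 < q.1 →
      0 < (q.1 - p.1) - 1 * (p.2 * (q.1 - 1) + q.2 * (1 - p.1)) := fun p hp q hq h1 h2 =>
    ext_cross h.convex (Or.inl rfl) hv hw.1 (hSK hp) (hSK hq) h1 h2
  have D2 : ∀ p ∈ S, ∀ q ∈ S, p.1 < 1 → 1 < q.1 →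
      0 < (q.1 - p.1) - (-1) * (p.2 * (q.1 - 1) + q.2 * (1 - p.1)) := fun p hp q hq h1 h2 =>
    ext_cross h.convex (Or.inr rfl) hw (by simpa using hv.1) (hSK hp) (hSK hq) h1 h2
  have hone : ∀ p ∈ S, p.1 = 1 → |p.2| ≤ 1 := by
    intro p hp hp1
    have hp' : ((1, p.2) : ℝ × ℝ) ∈ K := by rw [← hp1]; exact hSK hp
    have e1 := ext_vert (Or.inl rfl) hv hw.1 hp'
    have e2 := ext_vert (Or.inr rfl) hw (by simpa using hv.1) hp'
    rw [abs_le]; constructor <;> linarith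
  obtain ⟨b, hb, hb1, p, hp, q, hq, hp1, hp2, hq1, hpq⟩ := gap h.ext_finite mw hz _ D1
  obtain ⟨a, ha, ha1, p', hp', q', hq', hp1', hp2', hq1', hpq'⟩ := gap h.ext_finite mw hz _ D2
  have mpos : ∀ p q : ℝ × ℝ, p.1 < 1 → 1 < q.1 → 0 < (q.1 - 1) * (1 - p.1) := fun p q h1 h2 =>
    mul_pos (by linarith) (by linarith)
  have C0 : CutOK S := by
    have := cutOK_phi hs hv hw hz hone 0
      (fun p hp q hq _ h1 h2 => by rw [zero_mul]; exact (D1 p hp q hq h1 h2).le)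
      (fun p hp q hq _ h1 h2 => by rw [neg_zero, zero_mul]; exact (D2 p hp q hq h1 h2).le)
    rwa [phi_zero, image_id] at this
  have Cb : CutOK (phi b '' S) := cutOK_phi hs hv hw hz hone b hb1
    (fun p hp q hq _ h1 h2 => by
      have := D2 p hp q hq h1 h2
      have := mul_pos hb (mpos p q h1 h2)
      linarith)
  have Ca : CutOK (phi (-a) '' S) := cutOK_phi hs hv hw hz hone (-a)
    (fun p hp q hq _ h1 h2 => by
      have := D1 p hp q hq h1 h2
      have := mul_pos ha (mpos p q h1 h2)
      linarith) (by rw [neg_neg]; exact ha1)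
  have hull : ∀ t, CutOK (phi t '' S) → phi t '' K = convexHull ℝ (phi t '' S) := by
    intro t ht
    rw [← phi_hull t C0 ht hs, h.hull_ext]
  have key : ∀ (t e : ℝ) (p q : ℝ × ℝ), p ∈ S → q ∈ S → -1 ≤ p.1 → p.1 < 1 → 1 < q.1 →
      p.2 * (q.1 - 1) + (q.2 + t * (q.1 - 1)) * (1 - p.1) = e * (q.1 - p.1) →
      ((1, e) : ℝ × ℝ) ∈ S → CutOK (phi t '' S) → 
      (Good (phi t '' K) ∧ (extremePoints ℝ (phi t '' K)).ncard < (extremePoints ℝ K).ncard) := by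
    intro t e p q hp hq h1 h2 h3 heq he ht
    refine drop h t (hull t ht) (1, e) ⟨_, he, by simp [phi, bet]⟩ (phi t p) (phi t q)
      (mem_image_of_mem _ (hSK hp)) (mem_image_of_mem _ (hSK hq)) ?_ ?_
    · have := cross_seg (p := phi t p) (q := phi t q) h2 h3
      convert this using 2
      have e1 : bet p.1 = 0 := by
        unfold bet; rw [max_eq_right (by linarith), max_eq_right (by linarith)]; ring
      have e2 : bet q.1 = q.1 - 1 := by
        unfold bet; rw [max_eq_left (by linarith), max_eq_right (by linarith)]; ring
      have hpos : q.1 - p.1 ≠ 0 := by linarith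
      simp only [phi, e1, e2, mul_zero, add_zero]
      rw [heq]; field_simp
    · intro h4
      have := congrArg Prod.fst h4
      simp [phi] at this
      linarith
  refine ⟨-a, b, by linarith, hb, ?_, ?_⟩
  · exact key (-a) (-1) p' q' hp' hq' hp1' hp2' hq1' (by linarith) hw Ca
  · exact key b 1 p q hp hq hp1 hp2 hq1 (by linarith) hv Cb

lemma exists_equiv (v w : ℝ × ℝ) (hd : v.1 * w.2 - v.2 * w.1 ≠ 0) :
    ∃ e : (ℝ × ℝ) ≃L[ℝ] (ℝ × ℝ), (∀ q, e q = ((q.1 + q.2) / 2) • v + ((q.1 - q.2) / 2) • w) := by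
  let f : (ℝ × ℝ) →ₗ[ℝ] (ℝ × ℝ) :=
    { toFun := fun q => ((q.1 + q.2) / 2) • v + ((q.1 - q.2) / 2) • w
      map_add' := fun x y => by ext <;> simp <;> ring
      map_smul' := fun c x => by ext <;> simp <;> ring }
  have hinj : Function.Injective f := by
    rw [← LinearMap.ker_eq_bot, LinearMap.ker_eq_bot']
    intro q hq
    have h1 : (q.1 + q.2) / 2 * v.1 + (q.1 - q.2) / 2 * w.1 = 0 := congrArg Prod.fst hq
    have h2 : (q.1 + q.2) / 2 * v.2 + (q.1 - q.2) / 2 * w.2 = 0 := congrArg Prod.snd hq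
    have h3 : (q.1 + q.2) = 0 := by
      apply mul_right_cancel₀ hd
      linear_combination 2 * w.2 * h1 - 2 * w.1 * h2
    have h4 : (q.1 - q.2) = 0 := by
      apply mul_right_cancel₀ hd
      linear_combination -2 * v.2 * h1 + 2 * v.1 * h2
    ext
    · simp; linarith
    · simp; linarith
  exact ⟨(LinearEquiv.ofInjectiveEndo f hinj).toContinuousLinearEquiv, fun q => rfl⟩

lemma ext_par_aux {K : Set (ℝ × ℝ)} (h : Good K) {x y : ℝ × ℝ} (hx : x ∈ extremePoints ℝ K)
    (hy : y ∈ extremePoints ℝ K) (c : ℝ) (hc : |c| < 1) (e : y = c • x) : y = x := by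
  rw [abs_lt] at hc
  refine (hy.2 hx.1 (h.neg_mem hx.1) ⟨(1 + c) / 2, (1 - c) / 2, by linarith, by linarith, by ring, ?_⟩).symm
  rw [e]; ext <;> simp <;> ring

lemma ext_par {K : Set (ℝ × ℝ)} (h : Good K) {x y : ℝ × ℝ} (hx : x ∈ extremePoints ℝ K)
    (hy : y ∈ extremePoints ℝ K) (hd : x.1 * y.2 - x.2 * y.1 = 0) : y = x ∨ y = -x := by
  by_cases h0 : x = 0
  · exact Or.inl (ext_par_aux h hy hx 0 (by simp) (by simp [h0])).symm
  have hq : x.1 * x.1 + x.2 * x.2 ≠ 0 := by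
    intro hh
    apply h0
    ext
    · simp; nlinarith [mul_self_nonneg x.1, mul_self_nonneg x.2]
    · simp; nlinarith [mul_self_nonneg x.1, mul_self_nonneg x.2]
  obtain ⟨c, e⟩ : ∃ c : ℝ, y = c • x := by
    refine ⟨(x.1 * y.1 + x.2 * y.2) / (x.1 * x.1 + x.2 * x.2), ?_⟩
    ext
    · simp only [Prod.smul_fst, smul_eq_mul]; rw [div_mul_eq_mul_div, eq_div_iff hq]; linear_combination -x.2 * hd
    · simp only [Prod.smul_snd, smul_eq_mul]; rw [div_mul_eq_mul_div, eq_div_iff hq]; linear_combination x.1 * hd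
  rcases lt_trichotomy |c| 1 with hc | hc | hc
  · exact Or.inl (ext_par_aux h hx hy c hc e)
  · rcases (abs_eq one_pos.le).1 hc with rfl | rfl
    · left; simpa using e
    · right; simpa using e
  · left
    have hc0 : c ≠ 0 := by rintro rfl; simp at hc; linarith
    refine (ext_par_aux h hy hx c⁻¹ ?_ ?_).symm
    · rw [abs_inv]; exact inv_lt_one_of_one_lt₀ hc
    · rw [e, smul_smul, inv_mul_cancel₀ hc0, one_smul]

lemma normalize {K : Set (ℝ × ℝ)} (h : Good K) (hc : 4 < (extremePoints ℝ K).ncard) :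
    ∃ e : (ℝ × ℝ) ≃L[ℝ] (ℝ × ℝ), ((1, 1) : ℝ × ℝ) ∈ extremePoints ℝ (e '' K) ∧
      ((1, -1) : ℝ × ℝ) ∈ extremePoints ℝ (e '' K) ∧ ∃ z ∈ extremePoints ℝ (e '' K), 1 < z.1 := by
  obtain ⟨v, hv⟩ : (extremePoints ℝ K).Nonempty := by
    rw [← ncard_pos h.ext_finite]; omega
  obtain ⟨w, hw, hwn⟩ := exists_mem_notMem_of_ncard_lt_ncard
    (s := {v, -v}) (t := extremePoints ℝ K) (by
      have := ncard_insert_le v {-v}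
      rw [ncard_singleton] at this; omega) (by simp)
  obtain ⟨u, hu, hun⟩ := exists_mem_notMem_of_ncard_lt_ncard
    (s := {v, -v, w, -w}) (t := extremePoints ℝ K) (by
      have h1 := ncard_insert_le v {-v, w, -w}
      have h2 := ncard_insert_le (-v) {w, -w}
      have h3 := ncard_insert_le w {-w}
      rw [ncard_singleton] at h3; omega) (by simp)
  simp only [mem_insert_iff, mem_singleton_iff, not_or] at hwn hun
  have hd : v.1 * w.2 - v.2 * w.1 ≠ 0 := fun hd => by
    rcases ext_par h hv hw hd with e | e
    · exact hwn.1 e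
    · exact hwn.2 e
  obtain ⟨v', w', a, b, hv', hw', ha, hb, hu', hd', hsv, hsw⟩ : ∃ (v' w' : ℝ × ℝ) (a b : ℝ),
      v' ∈ extremePoints ℝ K ∧ w' ∈ extremePoints ℝ K ∧ 0 ≤ a ∧ 0 ≤ b ∧ u = a • v' + b • w' ∧
      v'.1 * w'.2 - v'.2 * w'.1 ≠ 0 ∧ (u ≠ v' ∧ u ≠ -v') ∧ (u ≠ w' ∧ u ≠ -w') := by
    obtain ⟨α, β, e⟩ : ∃ α β : ℝ, u = α • v + β • w := by
      refine ⟨(u.1 * w.2 - u.2 * w.1) / (v.1 * w.2 - v.2 * w.1),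
        (v.1 * u.2 - v.2 * u.1) / (v.1 * w.2 - v.2 * w.1), ?_⟩
      ext
      · simp only [Prod.smul_fst, Prod.fst_add, smul_eq_mul]
        rw [div_mul_eq_mul_div, div_mul_eq_mul_div, ← add_div, eq_div_iff hd]; ring
      · simp only [Prod.smul_snd, Prod.snd_add, smul_eq_mul]
        rw [div_mul_eq_mul_div, div_mul_eq_mul_div, ← add_div, eq_div_iff hd]; ring
    rcases le_total 0 α with hα | hα <;> rcases le_total 0 β with hβ | hβ
    · exact ⟨v, w, α, β, hv, hw, hα, hβ, e, hd, ⟨hun.1, hun.2.1⟩, hun.2.2⟩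
    · refine ⟨v, -w, α, -β, hv, h.neg_ext hw, hα, by linarith, by simpa using e, ?_, ⟨hun.1, hun.2.1⟩,
        hun.2.2.2, by simpa using hun.2.2.1⟩
      intro hh; apply hd; simp at hh; linarith
    · refine ⟨-v, w, -α, β, h.neg_ext hv, hw, by linarith, hβ, by simpa using e, ?_,
        ⟨hun.2.1, by simpa using hun.1⟩, hun.2.2⟩
      intro hh; apply hd; simp at hh; linarith
    · refine ⟨-v, -w, -α, -β, h.neg_ext hv, h.neg_ext hw, by linarith, by linarith,
        by simpa using e, ?_, ⟨hun.2.1, by simpa using hun.1⟩, hun.2.2.2, by simpa using hun.2.2.1⟩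
      intro hh; apply hd; simp at hh; linarith
  obtain ⟨e, he⟩ := exists_equiv v' w' hd'
  have key : ∀ x q, e q = x → x ∈ extremePoints ℝ K → q ∈ extremePoints ℝ (e.symm '' K) := by
    intro x q hq hx
    rw [← image_extremePoints e.symm K]
    exact ⟨x, hx, by rw [← hq]; simp⟩
  refine ⟨e.symm, key v' _ ?_ hv', key w' _ ?_ hw', (a + b, a - b), key u _ ?_ hu, ?_⟩
  · rw [he]; simp
  · rw [he]; ext <;> simp <;> ring
  · rw [he, hu']; ext <;> simp <;> ring
  · by_contra hab
    simp only [not_lt] at hab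
    have hsub : convexHull ℝ {v', -v', w', -w'} ⊆ K := by
      apply convexHull_min _ h.convex
      intro x hx
      simp only [mem_insert_iff, mem_singleton_iff] at hx
      rcases hx with rfl | rfl | rfl | rfl
      · exact hv'.1
      · exact h.neg_mem hv'.1
      · exact hw'.1
      · exact h.neg_mem hw'.1
    have hmem : u ∈ convexHull ℝ {v', -v', w', -w'} := by
      have hC := convex_convexHull ℝ ({v', -v', w', -w'} : Set (ℝ × ℝ))
      have := hC.sum_mem (t := Finset.univ) (w := ![a + (1 - a - b) / 2, (1 - a - b) / 2, b])
        (z := ![v', -v', w']) ?_ ?_ ?_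
      · convert this using 1
        rw [hu', Fin.sum_univ_three]
        ext <;> simp <;> ring
      · intro i _; fin_cases i <;> simp <;> linarith
      · rw [Fin.sum_univ_three]; simp; ring
      · intro i _
        apply subset_convexHull
        fin_cases i <;> simp
    have := extremePoints_convexHull_subset
      (inter_extremePoints_subset_extremePoints_of_subset hsub ⟨hmem, hu⟩)
    simp only [mem_insert_iff, mem_singleton_iff] at this
    tauto

lemma inner_pts {K : Set (ℝ × ℝ)} (h : Good K) (h1 : ((1, 1) : ℝ × ℝ) ∈ K)
    (h2 : ((1, -1) : ℝ × ℝ) ∈ K) (hz : ∃ z ∈ K, 1 < z.1) :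
    ∃ η > 0, ∀ s : ℝ, |s| ≤ 1 + η → ((s, 0) : ℝ × ℝ) ∈ interior K := by
  obtain ⟨z, hz, hz1⟩ := hz
  have h0 : (0 : ℝ × ℝ) ∈ interior K := by
    rw [mem_interior_iff_mem_nhds]
    have : Icc (-1 : ℝ) 1 ×ˢ Icc (-1 : ℝ) 1 ∈ nhds (0 : ℝ × ℝ) := by
      rw [show (0 : ℝ × ℝ) = (0, 0) from rfl]
      exact prod_mem_nhds (Icc_mem_nhds (by norm_num) (by norm_num))
        (Icc_mem_nhds (by norm_num) (by norm_num))
    refine Filter.mem_of_superset this ?_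
    rintro ⟨x, y⟩ ⟨hx, hy⟩
    simp only [mem_Icc] at hx hy
    have m1 := vert_mem h.convex h1 h2 (abs_le.2 hy)
    have m2 := h.neg_mem (vert_mem h.convex h1 h2 (y := -y) (by rw [abs_neg]; exact abs_le.2 hy))
    have := h.convex m1 m2 (a := (1 + x) / 2) (b := (1 - x) / 2) (by linarith) (by linarith) (by ring)
    convert this using 1
    ext <;> simp <;> ring
  have hpos : 0 < 1 + |z.2| := by positivity
  set l := 1 / (1 + |z.2|) with hl
  have hl0 : 0 < l := by positivity
  have hl1 : l ≤ 1 := by rw [hl, div_le_one hpos]; linarith [abs_nonneg z.2]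
  have hlz : l * (1 + |z.2|) = 1 := by rw [hl]; field_simp
  set ρ := l * (z.1 - 1) with hρ
  have hρ0 : 0 < ρ := mul_pos hl0 (by linarith)
  have hmem : ((1 + ρ, 0) : ℝ × ℝ) ∈ K := by
    rcases eq_or_ne z.2 0 with e0 | e0
    · have : l = 1 := by rw [hl, e0]; simp
      convert hz using 1
      ext
      · simp [hρ, this]
      · simp [e0]
    · obtain ⟨s, hs, hs'⟩ : ∃ s : ℝ, |s| ≤ 1 ∧ s * |z.2| = - z.2 := by
        rcases le_total 0 z.2 with hh | hh
        · exact ⟨-1, by simp, by rw [abs_of_nonneg hh]; ring⟩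
        · exact ⟨1, by simp, by rw [abs_of_nonpos hh]; ring⟩
      have m := vert_mem h.convex h1 h2 hs
      have := h.convex hz m (a := l) (b := 1 - l) hl0.le (by linarith) (by ring)
      convert this using 1
      ext
      · simp [hρ]; ring
      · simp
        have : (1 - l) = l * |z.2| := by linarith
        rw [this]; linear_combination - l * hs'
  have main : ∀ s : ℝ, 0 < s → s < 1 + ρ → ((s, 0) : ℝ × ℝ) ∈ interior K := by
    intro s hs hs'
    apply h.convex.openSegment_interior_self_subset_interior h0 hmem
    refine ⟨1 - s / (1 + ρ), s / (1 + ρ), ?_, by positivity, by ring, ?_⟩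
    · rw [sub_pos, div_lt_one (by linarith)]; exact hs'
    · ext <;> simp
      field_simp
  refine ⟨ρ / 2, by linarith, fun s hs => ?_⟩
  rw [abs_le] at hs
  rcases lt_trichotomy s 0 with h' | h' | h'
  · have := main (-s) (by linarith) (by linarith)
    have hn : -((-s, 0) : ℝ × ℝ) ∈ -interior K := by simpa using this
    have e : -interior K = interior K := by
      have := (Homeomorph.neg (ℝ × ℝ)).image_interior K
      simp only [Homeomorph.coe_neg, image_neg_eq_neg] at this
      rw [this, ← h.2.1]
    rw [e] at hn
    simpa using hn
  · rw [h']; exact h0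
  · exact main s h' (by linarith)

lemma ncard_ext_image {V W : Type*} [NormedAddCommGroup V] [NormedSpace ℝ V]
    [NormedAddCommGroup W] [NormedSpace ℝ W] (e : V ≃L[ℝ] W) (K : Set V) :
    (extremePoints ℝ (e '' K)).ncard = (extremePoints ℝ K).ncard := by
  rw [← image_extremePoints e K]
  exact ncard_image_of_injective _ e.injective

/-- The sign pattern allows a nondegenerate configuration. -/
def Rich {n : ℕ} {J : Type} (σ : J → Fin n) (ε : J → ℝ) : Prop :=
  ∀ η : ℝ, 0 < η → ∃ c : Fin n → ℝ, (∀ i, |c i| ≤ 1 + η) ∧ ∃ j₁ j₂ j₃ : J,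
    ε j₁ * c (σ j₁) = 1 / 2 ∧ ε j₂ * c (σ j₂) = -1 / 2 ∧ 1 < ε j₃ * c (σ j₃)

lemma step {n : ℕ} {J : Type} [Finite J] (σ : J → Fin n) (ε : J → ℝ)
    (hε : ∀ j, ε j = 1 ∨ ε j = -1) (hR : Rich σ ε) (p : ℝ) (hp : 1 ≤ p)
    {K : Set (ℝ × ℝ)} (h : Good K) (hc : 4 < (extremePoints ℝ K).ncard) :
    ∃ K', Good K' ∧ (extremePoints ℝ K').ncard < (extremePoints ℝ K).ncard ∧
      Fm n σ ε p K < Fm n σ ε p K' := by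
  obtain ⟨e, hv, hw, z, hz, hz1⟩ := normalize h hc
  have hg := h.image e
  obtain ⟨a, b, ha, hb, ⟨ga, ca⟩, gb, cb⟩ := step_norm hg hv hw ⟨z, hz, hz1⟩
  obtain ⟨η, hη, hint⟩ := inner_pts hg hv.1 hw.1 ⟨z, hz.1, hz1⟩
  obtain ⟨c, hcle, j₁, j₂, j₃, h₁, h₂, h₃⟩ := hR η hη
  have := Fm_strict σ ε hε p hp (e '' K) hg.compact hg.2.1 hg.convex hg.2.2 a b ha hb
    ga.convex gb.convex (fun i => (c i, 0)) (fun i => hint _ (hcle i)) (fun i => rfl) j₁ j₂ j₃ h₁ h₂ h₃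
  rw [Fm_image e n σ ε p K h.2.2 h.compact.measure_lt_top.ne, lt_max_iff] at this
  rw [ncard_ext_image] at ca cb
  rcases this with this | this
  · exact ⟨_, ga, ca, this⟩
  · exact ⟨_, gb, cb, this⟩

lemma square_hull : Icc (-1 : ℝ) 1 ×ˢ Icc (-1 : ℝ) 1 =
    convexHull ℝ ({(1, 1), -(1, 1), (1, -1), -(1, -1)} : Set (ℝ × ℝ)) := by
  have h1 : Icc (-1 : ℝ) 1 = convexHull ℝ {-1, 1} := by
    rw [convexHull_pair, segment_eq_Icc (by norm_num)]
  rw [h1, ← convexHull_prod]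
  congr 1
  ext ⟨x, y⟩
  simp
  tauto

lemma base {K : Set (ℝ × ℝ)} (h : Good K) (hc : (extremePoints ℝ K).ncard ≤ 4) :
    ∃ e : (ℝ × ℝ) ≃L[ℝ] (ℝ × ℝ), K = e '' (Icc (-1 : ℝ) 1 ×ˢ Icc (-1 : ℝ) 1) := by
  obtain ⟨v, hv⟩ : (extremePoints ℝ K).Nonempty := by
    rw [nonempty_iff_ne_empty]
    intro he
    have := h.hull_ext
    rw [he, convexHull_empty] at this
    apply h.2.2; rw [← this]; simp
  obtain ⟨w, hw, hwn⟩ : ∃ w ∈ extremePoints ℝ K, ¬ (w = v ∨ w = -v) := by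
    by_contra hcon
    push Not at hcon
    apply h.2.2
    have hsub : K ⊆ (Submodule.span ℝ {v} : Submodule ℝ (ℝ × ℝ)) := by
      conv_lhs => rw [← h.hull_ext]
      apply convexHull_min _ (Submodule.convex _)
      intro w hw
      have hvs : v ∈ (Submodule.span ℝ {v} : Submodule ℝ (ℝ × ℝ)) := Submodule.mem_span_singleton_self v
      rcases hcon w hw with rfl | rfl
      · exact hvs
      · exact Submodule.neg_mem _ hvs
    refine measure_mono_null hsub (Measure.addHaar_submodule _ _ ?_)
    intro htop
    have h1 := finrank_span_le_card (R := ℝ) ({v} : Set (ℝ × ℝ))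
    rw [htop, finrank_top] at h1
    simp at h1
  have hd : v.1 * w.2 - v.2 * w.1 ≠ 0 := fun hd => hwn (ext_par h hv hw hd)
  have hv0 : v ≠ 0 := by rintro rfl; simp at hd
  have hw0 : w ≠ 0 := by rintro rfl; simp at hd
  have nv : v ≠ -v := fun e => hv0 (self_eq_neg.1 e)
  have nw : w ≠ -w := fun e => hw0 (self_eq_neg.1 e)
  push Not at hwn
  have hset : ({v, -v, w, -w} : Set (ℝ × ℝ)) = extremePoints ℝ K := by
    refine eq_of_subset_of_ncard_le ?_ ?_ h.ext_finite
    · intro x hx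
      simp only [mem_insert_iff, mem_singleton_iff] at hx
      rcases hx with rfl | rfl | rfl | rfl
      · exact hv
      · exact h.neg_ext hv
      · exact hw
      · exact h.neg_ext hw
    · refine hc.trans ?_
      rw [ncard_insert_of_notMem, ncard_insert_of_notMem, ncard_pair nw]
      · simp only [mem_insert_iff, mem_singleton_iff, not_or]
        exact ⟨fun e => hwn.2 e.symm, fun e => hwn.1 (by simpa using e.symm)⟩
      · simp only [mem_insert_iff, mem_singleton_iff, not_or]
        exact ⟨nv, fun e => hwn.1 e.symm, fun e => hwn.2 (by rw [e, neg_neg])⟩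
  obtain ⟨e, he⟩ := exists_equiv v w hd
  have e1 : e (1, 1) = v := by rw [he]; simp
  have e2 : e (1, -1) = w := by rw [he]; ext <;> simp <;> ring
  refine ⟨e, ?_⟩
  rw [square_hull, ← h.hull_ext, ← hset]
  have := LinearMap.image_convexHull (e : (ℝ × ℝ) →ₗ[ℝ] (ℝ × ℝ)) {(1, 1), -(1, 1), (1, -1), -(1, -1)}
  refine Eq.trans ?_ this.symm
  congr 1
  rw [image_insert_eq, image_insert_eq, image_insert_eq, image_singleton]
  have k (x) : (e : (ℝ × ℝ) →ₗ[ℝ] (ℝ × ℝ)) x = e x := rfl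
  rw [map_neg, map_neg, k, k, e1, e2]

lemma main_le {n : ℕ} {J : Type} [Finite J] (σ : J → Fin n) (ε : J → ℝ)
    (hε : ∀ j, ε j = 1 ∨ ε j = -1) (hR : Rich σ ε) (p : ℝ) (hp : 1 ≤ p) (m : ℕ) :
    ∀ K : Set (ℝ × ℝ), Good K → (extremePoints ℝ K).ncard = m →
      Fm n σ ε p K ≤ Fm n σ ε p (Icc (-1 : ℝ) 1 ×ˢ Icc (-1 : ℝ) 1) := by
  induction m using Nat.strong_induction_on with
  | _ m ih =>
    intro K h hm
    by_cases hc : 4 < (extremePoints ℝ K).ncard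
    · obtain ⟨K', h', hlt, hF⟩ := step σ ε hε hR p hp h hc
      exact hF.le.trans (ih _ (hm ▸ hlt) K' h' rfl)
    · obtain ⟨e, he⟩ := base h (not_lt.1 hc)
      have := Fm_image e n σ ε p (Icc (-1 : ℝ) 1 ×ˢ Icc (-1 : ℝ) 1) ?_ ?_
      · rw [he, this]
      · rw [Measure.volume_eq_prod, Measure.prod_prod]; simp
      · exact (isCompact_Icc.prod isCompact_Icc).measure_lt_top.ne

lemma main_lt {n : ℕ} {J : Type} [Finite J] (σ : J → Fin n) (ε : J → ℝ)
    (hε : ∀ j, ε j = 1 ∨ ε j = -1) (hR : Rich σ ε) (p : ℝ) (hp : 1 ≤ p)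
    (K : Set (ℝ × ℝ)) (h : Good K) (hc : 4 < (extremePoints ℝ K).ncard) :
    Fm n σ ε p K < Fm n σ ε p (Icc (-1 : ℝ) 1 ×ˢ Icc (-1 : ℝ) 1) := by
  obtain ⟨K', h', hlt, hF⟩ := step σ ε hε hR p hp h hc
  exact hF.trans_le (main_le σ ε hε hR p hp _ K' h' rfl)

lemma rich_U (N : ℕ) (hN : 2 ≤ N) :
    Rich (id : Fin (N + 1) → Fin (N + 1)) (fun _ => 1) := by
  intro η hη
  refine ⟨fun i => if i.1 = 0 then 1 / 2 else if i.1 = 1 then -1 / 2 else 1 + η, ?_,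
    ⟨0, by omega⟩, ⟨1, by omega⟩, ⟨2, by omega⟩, by simp, by simp, by simpa using hη⟩
  intro i
  dsimp only
  split_ifs <;> rw [abs_le] <;> constructor <;> linarith

lemma rich_V (N : ℕ) (hN : 2 ≤ N) :
    Rich (Sum.elim id id : Fin N ⊕ Fin N → Fin N) (Sum.elim (fun _ => 1) (fun _ => -1)) := by
  intro η hη
  refine ⟨fun i => if i.1 = 0 then 1 / 2 else 1 + η, ?_,
    Sum.inl ⟨0, by omega⟩, Sum.inr ⟨0, by omega⟩, Sum.inl ⟨1, by omega⟩, by simp, by simp; norm_num,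
    by simpa using hη⟩
  intro i
  dsimp only
  split_ifs <;> rw [abs_le] <;> constructor <;> linarith

lemma final_lt {n : ℕ} {J : Type} [Finite J] (σ : J → Fin n) (ε : J → ℝ)
    (hε : ∀ j, ε j = 1 ∨ ε j = -1) (hR : Rich σ ε)
    (K : Set (EuclideanSpace ℝ (Fin 2))) (hK : IsSymConvexBody K)
    (hpoly : ∃ S : Finset (EuclideanSpace ℝ (Fin 2)), K = convexHull ℝ (S : Set _))
    (hvert : 4 < (Set.extremePoints ℝ K).ncard)
    (p : ℝ) (hp : 1 ≤ p)
    (L : EuclideanSpace ℝ (Fin 2) ≃ₗ[ℝ] EuclideanSpace ℝ (Fin 2))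
    (P : Set (EuclideanSpace ℝ (Fin 2)))
    (hP : P = L '' {x | ∀ i, x i ∈ Set.Icc (-1 : ℝ) 1}) :
    Fm n σ ε p K < Fm n σ ε p P := by
  let e₀ : EuclideanSpace ℝ (Fin 2) ≃L[ℝ] ℝ × ℝ :=
    (EuclideanSpace.equiv (Fin 2) ℝ).trans (ContinuousLinearEquiv.finTwoArrow ℝ ℝ)
  have he₀ (x) : e₀ x = (x 0, x 1) := rfl
  obtain ⟨hKc, hKconv, hKi, hKs⟩ := hK
  have hK0 : volume K ≠ 0 := (Measure.measure_pos_of_nonempty_interior _ hKi).ne'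
  have hg : Good (e₀ '' K) := by
    obtain ⟨S, hS⟩ := hpoly
    refine ⟨⟨e₀ '' S, S.finite_toSet.image _, ?_⟩, ?_, ?_⟩
    · rw [hS]; exact LinearMap.image_convexHull (e₀ : EuclideanSpace ℝ (Fin 2) →ₗ[ℝ] (ℝ × ℝ)) _
    · conv_lhs => rw [hKs]
      ext x
      simp only [mem_image, mem_neg]
      constructor
      · rintro ⟨y, hy, rfl⟩; exact ⟨-y, hy, by simp⟩
      · rintro ⟨y, hy, hx⟩; exact ⟨-y, by simpa using hy, by simp [hx]⟩
    · obtain ⟨c, c0, cT, hc⟩ := exists_scale e₀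
      rw [scale_image e₀ c hc]
      exact mul_ne_zero c0 hK0
  have h1 := main_lt σ ε hε hR p hp _ hg (by rw [ncard_ext_image]; exact hvert)
  rw [Fm_image e₀ n σ ε p K hK0 hKc.measure_lt_top.ne] at h1
  let f : (ℝ × ℝ) ≃L[ℝ] EuclideanSpace ℝ (Fin 2) := e₀.symm.trans L.toContinuousLinearEquiv
  have hPf : P = f '' (Icc (-1 : ℝ) 1 ×ˢ Icc (-1 : ℝ) 1) := by
    rw [hP]
    ext x
    constructor
    · rintro ⟨y, hy, rfl⟩
      refine ⟨e₀ y, ⟨hy 0, hy 1⟩, ?_⟩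
      simp [f]
    · rintro ⟨q, hq, rfl⟩
      refine ⟨e₀.symm q, ?_, rfl⟩
      have hh : e₀ (e₀.symm q) = q := by simp
      rw [he₀] at hh
      rw [← hh] at hq
      intro i
      fin_cases i
      · exact hq.1
      · exact hq.2
  rw [hPf, Fm_image f]
  · exact h1
  · rw [Measure.volume_eq_prod, Measure.prod_prod]; simp
  · exact (isCompact_Icc.prod isCompact_Icc).measure_lt_top.ne

lemma momentU_eq (N : ℕ) (K : Set (EuclideanSpace ℝ (Fin 2))) (p : ℝ) :
    momentU 2 N K p = Fm N (id : Fin N → Fin N) (fun _ => 1) p K := by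
  simp [momentU, Fm]

lemma momentV_eq (N : ℕ) (K : Set (EuclideanSpace ℝ (Fin 2))) (p : ℝ) :
    momentV 2 N K p = Fm N (Sum.elim id id : Fin N ⊕ Fin N → Fin N)
      (Sum.elim (fun _ => 1) (fun _ => -1)) p K := by
  have (x : Fin N → EuclideanSpace ℝ (Fin 2)) : range x ∪ -range x =
      range fun j : Fin N ⊕ Fin N => (Sum.elim (fun _ => (1 : ℝ)) (fun _ => -1) j) •
        x ((Sum.elim id id : Fin N ⊕ Fin N → Fin N) j) := by
    ext y
    simp only [mem_union, mem_range, mem_neg, Sum.exists, Sum.elim_inl, Sum.elim_inr, id, one_smul,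
      neg_one_smul, neg_eq_iff_eq_neg]
  simp only [momentV, Fm, this]


end PolyMoment

/-- If `K ⊆ ℝ²` is a symmetric convex polygon with more than 4 vertices, then for every
real `p ≥ 1` and integer `N ≥ 2` one has the strict inequalities
`𝔼 U_{K, N+1}^p < 𝔼 U_{𝒫, N+1}^p` and `𝔼 V_{K, N}^p < 𝔼 V_{𝒫, N}^p`, where `𝒫` is any
symmetric parallelogram (the image of `[-1,1]²` under an invertible linear map). -/
theorem momentUV_lt_parallelogram_of_polygon
    (K : Set (EuclideanSpace ℝ (Fin 2))) (hK : IsSymConvexBody K)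
    (hpoly : ∃ S : Finset (EuclideanSpace ℝ (Fin 2)), K = convexHull ℝ (S : Set _))
    (hvert : 4 < (Set.extremePoints ℝ K).ncard)
    (p : ℝ) (hp : 1 ≤ p) (N : ℕ) (hN : 2 ≤ N)
    (L : EuclideanSpace ℝ (Fin 2) ≃ₗ[ℝ] EuclideanSpace ℝ (Fin 2))
    (P : Set (EuclideanSpace ℝ (Fin 2)))
    (hP : P = L '' {x | ∀ i, x i ∈ Set.Icc (-1 : ℝ) 1}) :
    momentU 2 (N + 1) K p < momentU 2 (N + 1) P p ∧
      momentV 2 N K p < momentV 2 N P p := by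
  rw [PolyMoment.momentU_eq, PolyMoment.momentU_eq, PolyMoment.momentV_eq, PolyMoment.momentV_eq]
  exact ⟨PolyMoment.final_lt _ _ (fun _ => Or.inl rfl) (PolyMoment.rich_U N hN) K hK hpoly hvert
      p hp L P hP,
    PolyMoment.final_lt _ _ (by rintro (j | j) <;> simp) (PolyMoment.rich_V N hN) K hK hpoly hvert
      p hp L P hP⟩
end
end

section
/- For every symmetric convex body K ⊂ ℝ², one has 𝔼 V_{K,2}² ≤ 1/18, with equality when K is a parallelogram. Equivalently, the isotropic constant L_K = (1/2)(2! 𝔼 V_{K,2}²)^{1/4} of any symmetric convex body K ⊂ ℝ² satisfies L_K ≤ L_𝒫 = 12^{-1/2}. -/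
open MeasureTheory Set

noncomputable section

variable {E : Type*} [NormedAddCommGroup E] [InnerProductSpace ℝ E]

theorem poly_ineq (S T : ℝ) (hS : 0 ≤ S) (hT : 0 ≤ T) (hS1 : S ≤ 1) (hT1 : T ≤ 1) :
  (4+2*T-T^2+6*S+4*S^2+S^3)*(4+2*S-S^2+6*T+4*T^2+T^3) ≤ (2+S+T)^4 := by
  have a1 := mul_nonneg hS hT
  have b1 := sub_nonneg.2 hS1
  have b2 := sub_nonneg.2 hT1
  nlinarith [mul_nonneg a1 b1, mul_nonneg a1 b2, mul_nonneg a1 (mul_nonneg b1 b2), mul_nonneg (mul_nonneg a1 a1) b1, mul_nonneg (mul_nonneg a1 a1) b2, mul_nonneg (mul_nonneg a1 a1) (mul_nonneg b1 b2), pow_nonneg hS 3, pow_nonneg hT 3, mul_nonneg (pow_nonneg hS 3) b1, mul_nonneg (pow_nonneg hT 3) b2, mul_nonneg a1 (sq_nonneg (S-T)), mul_nonneg (mul_nonneg a1 (sq_nonneg (S-T))) b1,mul_nonneg (mul_nonneg a1 (sq_nonneg (S-T))) b2]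

theorem crossing (f g φ : ℝ → ℝ) (a b : ℝ) (hab : a ≤ b)
    (hf : IntervalIntegrable f volume a b) (hg : IntervalIntegrable g volume a b)
    (hφ : Continuous φ) (hm : MonotoneOn φ (Icc a b))
    (hfg : ∫ t in a..b, f t = ∫ t in a..b, g t)
    (hc : ∀ t0 ∈ Icc a b, ∀ t ∈ Icc a b, t0 < t → f t0 < g t0 → f t ≤ g t) :
    ∫ t in a..b, φ t * f t ≤ ∫ t in a..b, φ t * g t := by
  obtain ⟨c, hcI, hcc⟩ : ∃ c ∈ Icc a b, ∀ t ∈ Icc a b, (t < c → g t ≤ f t) ∧ (c < t → f t ≤ g t) := by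
    by_cases hA : ({t ∈ Icc a b | f t < g t}).Nonempty
    · have hbd : BddBelow {t ∈ Icc a b | f t < g t} := ⟨a, fun t ht => ht.1.1⟩
      refine ⟨sInf {t ∈ Icc a b | f t < g t}, ⟨le_csInf hA fun t ht => ht.1.1, ?_⟩, fun t ht => ⟨fun h => ?_, fun h => ?_⟩⟩
      · obtain ⟨t, ht⟩ := hA
        exact (csInf_le hbd ht).trans ht.1.2
      · by_contra hlt
        exact absurd (csInf_le hbd ⟨ht, not_le.1 hlt⟩) (not_le.2 h)
      · obtain ⟨t0, ht0, h0⟩ := exists_lt_of_csInf_lt hA h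
        exact hc t0 ht0.1 t ht h0 ht0.2
    · refine ⟨b, ⟨hab, le_rfl⟩, fun t ht => ⟨fun h => ?_, fun h => absurd h (not_lt.2 ht.2)⟩⟩
      by_contra hlt
      exact hA ⟨t, ht, not_le.1 hlt⟩
  have h1 : ∫ t in a..b, (φ t * f t - φ c * f t) ≤ ∫ t in a..b, (φ t * g t - φ c * g t) := by
    apply intervalIntegral.integral_mono_on hab
    · exact (hf.continuousOn_mul hφ.continuousOn).sub (hf.const_mul _)
    · exact (hg.continuousOn_mul hφ.continuousOn).sub (hg.const_mul _)
    · intro t ht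
      obtain ⟨h1, h2⟩ := hcc t ht
      rcases lt_trichotomy t c with h | h | h
      · nlinarith [h1 h, hm ht hcI h.le]
      · subst h; simp
      · nlinarith [h2 h, hm hcI ht h.le]
  rw [intervalIntegral.integral_sub (hf.continuousOn_mul hφ.continuousOn) (hf.const_mul _),
    intervalIntegral.integral_sub (hg.continuousOn_mul hφ.continuousOn) (hg.const_mul _),
    intervalIntegral.integral_const_mul, intervalIntegral.integral_const_mul, hfg] at h1
  linarith

/-- inner part -/
theorem inner_bound (f : ℝ → ℝ) (T : ℝ) (hf : IntervalIntegrable f volume 0 1)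
    (hT : ∫ t in (0:ℝ)..1, f t = 2 + T) (hT0 : 0 ≤ T)
    (hle : ∀ t ∈ Icc (0:ℝ) 1, f t ≤ 4 - 2 * t)
    (hanti : ∀ t0 ∈ Icc (0:ℝ) 1, ∀ t ∈ Icc (0:ℝ) 1, t0 < t → f t ≤ f t0) :
    T ≤ 1 ∧ ∫ t in (0:ℝ)..1, t ^ 2 * f t ≤ 2 / 3 + (2 * T - T ^ 2) / 6 := by
  have hT1 : T ≤ 1 := by
    have : ∫ t in (0:ℝ)..1, f t ≤ ∫ t in (0:ℝ)..1, (4 - 2 * t) :=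
      intervalIntegral.integral_mono_on zero_le_one hf
        (Continuous.intervalIntegrable (by fun_prop) _ _) hle
    rw [hT] at this
    have h2 : ∫ t in (0:ℝ)..1, (4 - 2 * t) = 3 := by
      rw [intervalIntegral.integral_sub (by simp) (Continuous.intervalIntegrable (by fun_prop) _ _),
        intervalIntegral.integral_const_mul, integral_id]
      norm_num
    linarith
  refine ⟨hT1, ?_⟩
  -- r = 1 - k
  obtain ⟨r, hr0, hr⟩ : ∃ r : ℝ, 0 ≤ r ∧ r ^ 2 = 1 - T :=
    ⟨√(1 - T), Real.sqrt_nonneg _, Real.sq_sqrt (by linarith)⟩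
  have hr1 : r ≤ 1 := by nlinarith
  have hci : ∀ (F : ℝ → ℝ) (a b : ℝ), Continuous F → IntervalIntegrable F volume a b :=
    fun F a b h => h.intervalIntegrable a b
  have key : ∀ φ : ℝ → ℝ, Continuous φ →
      ∫ t in (0:ℝ)..1, φ t * min (4 - 2 * t) (4 - 2 * r) =
      (∫ t in (0:ℝ)..r, φ t * (4 - 2 * r)) + ∫ t in r..1, φ t * (4 - 2 * t) := by
    intro φ hφ
    rw [← intervalIntegral.integral_add_adjacent_intervals (b := r)
      (hci _ _ _ (by fun_prop)) (hci _ _ _ (by fun_prop))]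
    congr 1
    · apply intervalIntegral.integral_congr
      intro t ht
      rw [uIcc_of_le hr0] at ht
      simp only
      rw [min_eq_right (by linarith [ht.2])]
    · apply intervalIntegral.integral_congr
      intro t ht
      rw [uIcc_of_le hr1] at ht
      simp only
      rw [min_eq_left (by linarith [ht.1])]
  have k0 : ∫ t in (0:ℝ)..1, min (4 - 2 * t) (4 - 2 * r) = 2 + T := by
    have := key (fun _ => 1) continuous_const
    simp only [one_mul] at this
    rw [this, intervalIntegral.integral_const, intervalIntegral.integral_sub (by simp) (hci _ _ _ (by fun_prop)),
        intervalIntegral.integral_const_mul, integral_id]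
    simp
    nlinarith
  have k2 : ∫ t in (0:ℝ)..1, t ^ 2 * min (4 - 2 * t) (4 - 2 * r) = 2 / 3 + (2 * T - T ^ 2) / 6 := by
    have := key (fun t => t ^ 2) (by fun_prop)
    rw [this]
    have e : ∀ t : ℝ, t ^ 2 * (4 - 2 * t) = 4 * t ^ 2 - 2 * t ^ 3 := fun t => by ring
    simp only [e]
    rw [intervalIntegral.integral_sub (hci _ _ _ (by fun_prop)) (hci _ _ _ (by fun_prop)),
        intervalIntegral.integral_const_mul, intervalIntegral.integral_const_mul,
        intervalIntegral.integral_mul_const, integral_pow, integral_pow]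
    have : T = 1 - r ^ 2 := by linarith
    subst this
    norm_num
    ring
  rw [← k2]
  apply crossing f _ (fun t => t ^ 2) 0 1 zero_le_one hf (hci _ _ _ (by fun_prop)) (by fun_prop)
  · intro x hx y hy hxy
    exact pow_le_pow_left₀ hx.1 hxy 2
  · rw [hT, k0]
  · intro t0 ht0 t ht htt hlt
    have h1 := hle t ht
    have h2 := hanti t0 ht0 t ht htt
    exact le_min h1 (h2.trans (hlt.le.trans (min_le_right _ _)))

theorem outer_bound (f : ℝ → ℝ) (S : ℝ) (hf : IntervalIntegrable f volume 1 2)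
    (hS : ∫ t in (1:ℝ)..2, f t = S) (h0 : ∀ t, 0 ≤ f t)
    (hle : ∀ t ∈ Icc (1:ℝ) 2, f t ≤ 4 - 2 * t)
    (hstar : ∀ t0 ∈ Icc (1:ℝ) 2, ∀ t ∈ Icc (1:ℝ) 2, t0 < t → 0 < f t →
      2 * (t - t0) + (t0 - 1) * f t ≤ (t - 1) * f t0) :
    0 ≤ S ∧ S ≤ 1 ∧ ∫ t in (1:ℝ)..2, t ^ 2 * f t ≤ S + 2 * S ^ 2 / 3 + S ^ 3 / 6 := by
  have hci : ∀ (F : ℝ → ℝ) (a b : ℝ), Continuous F → IntervalIntegrable F volume a b :=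
    fun F a b h => h.intervalIntegrable a b
  have hS1 : S ≤ 1 := by
    have : ∫ t in (1:ℝ)..2, f t ≤ ∫ t in (1:ℝ)..2, (4 - 2 * t) :=
      intervalIntegral.integral_mono_on one_le_two hf (hci _ _ _ (by fun_prop)) hle
    rw [hS] at this
    have h2 : ∫ t in (1:ℝ)..2, (4 - 2 * t) = 1 := by
      rw [intervalIntegral.integral_sub (by simp) (Continuous.intervalIntegrable (by fun_prop) _ _),
        intervalIntegral.integral_const_mul, integral_id]
      norm_num
    linarith
  have hS0 : 0 ≤ S := by
    rw [← hS]; exact intervalIntegral.integral_nonneg one_le_two fun t _ => h0 t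
  refine ⟨hS0, hS1, ?_⟩
  rcases hS0.eq_or_lt with hz | hpos
  · have : ∫ t in (1:ℝ)..2, t ^ 2 * f t ≤ ∫ t in (1:ℝ)..2, 4 * f t := by
      apply intervalIntegral.integral_mono_on one_le_two
        (hf.continuousOn_mul (by fun_prop)) (hf.const_mul _)
      intro t ht
      exact mul_le_mul_of_nonneg_right (by nlinarith [ht.1, ht.2]) (h0 t)
    rw [intervalIntegral.integral_const_mul, hS] at this
    rw [← hz] at this ⊢
    simpa using this
  have key : ∀ φ : ℝ → ℝ, Continuous φ →
      ∫ t in (1:ℝ)..2, φ t * max (2 - 2 * (t - 1) / S) 0 =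
      ∫ t in (1:ℝ)..(1 + S), φ t * (2 - 2 * (t - 1) / S) := by
    intro φ hφ
    rw [← intervalIntegral.integral_add_adjacent_intervals (b := 1 + S)
      (hci _ _ _ (by fun_prop)) (hci _ _ _ (by fun_prop))]
    rw [← add_zero (∫ t in (1:ℝ)..(1 + S), φ t * (2 - 2 * (t - 1) / S))]
    congr 1
    · apply intervalIntegral.integral_congr
      intro t ht
      rw [uIcc_of_le (by linarith)] at ht
      simp only
      rw [max_eq_left]
      rw [sub_nonneg, div_le_iff₀ hpos]; linarith [ht.2]
    · refine Eq.trans (intervalIntegral.integral_congr (g := fun _ => 0) ?_)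
        intervalIntegral.integral_zero
      intro t ht
      rw [uIcc_of_le (by linarith)] at ht
      simp only
      rw [max_eq_right, mul_zero]
      rw [sub_nonpos, le_div_iff₀ hpos]; linarith [ht.1]
  have k0 : ∫ t in (1:ℝ)..2, max (2 - 2 * (t - 1) / S) 0 = S := by
    have := key (fun _ => 1) continuous_const
    simp only [one_mul] at this
    rw [this]
    have e : ∀ t : ℝ, (2 - 2 * (t - 1) / S) = (2 + 2 / S) - (2 / S) * t := fun t => by ring
    simp only [e]
    rw [intervalIntegral.integral_sub (by simp) (hci _ _ _ (by fun_prop)),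
        intervalIntegral.integral_const_mul, integral_id]
    simp
    field_simp
    ring
  have k2 : ∫ t in (1:ℝ)..2, t ^ 2 * max (2 - 2 * (t - 1) / S) 0 = S + 2 * S ^ 2 / 3 + S ^ 3 / 6 := by
    have := key (fun t => t ^ 2) (by fun_prop)
    rw [this]
    have e : ∀ t : ℝ, t ^ 2 * (2 - 2 * (t - 1) / S) = (2 + 2 / S) * t ^ 2 - (2 / S) * t ^ 3 :=
      fun t => by ring
    simp only [e]
    rw [intervalIntegral.integral_sub (hci _ _ _ (by fun_prop)) (hci _ _ _ (by fun_prop)),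
        intervalIntegral.integral_const_mul, intervalIntegral.integral_const_mul, integral_pow, integral_pow]
    norm_num
    field_simp
    ring
  rw [← k2]
  apply crossing f _ (fun t => t ^ 2) 1 2 one_le_two hf (hci _ _ _ (by fun_prop)) (by fun_prop)
  · intro x hx y hy hxy
    exact pow_le_pow_left₀ (by linarith [hx.1]) hxy 2
  · rw [hS, k0]
  · intro t0 ht0 t ht htt hlt
    rcases (h0 t).eq_or_lt with hz | hp
    · rw [← hz]; exact le_max_right _ _
    have h1 := hstar t0 ht0 t ht htt hp
    apply le_max_of_le_left
    rcases lt_max_iff.1 hlt with h | h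
    · rcases ht0.1.eq_or_lt with h2 | h2
      · subst h2
        simp at h h1
        nlinarith
      · have h3 : (t - 1) * f t0 < (t - 1) * (2 - 2 * (t0 - 1) / S) :=
          mul_lt_mul_of_pos_left h (by linarith)
        have h4 : (t0 - 1) * f t ≤ (t0 - 1) * (2 - 2 * (t - 1) / S) := by
          have : (t - 1) * (2 - 2 * (t0 - 1) / S) - 2 * (t - t0) = (t0 - 1) * (2 - 2 * (t - 1) / S) := by
            field_simp; ring
          linarith
        exact le_of_mul_le_mul_left h4 (by linarith)
    · exact absurd h (not_lt.2 (h0 _))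

noncomputable def sec (Q : Set (ℝ × ℝ)) (u : ℝ) : ℝ := volume.real (Prod.mk u ⁻¹' Q)

structure Pos (Q : Set (ℝ × ℝ)) : Prop where
  cpt : IsCompact Q
  conv : Convex ℝ Q
  symm : ∀ p ∈ Q, -p ∈ Q
  sq : ∀ u v : ℝ, |u| ≤ 1 → |v| ≤ 1 → (u, v) ∈ Q
  dia : ∀ p ∈ Q, |p.1| + |p.2| ≤ 2

theorem Pos.swap {Q : Set (ℝ × ℝ)} (h : Pos Q) : Pos (Prod.swap ⁻¹' Q) where
  cpt := by
    have := h.cpt.image continuous_swap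
    rwa [Set.image_swap_eq_preimage_swap] at this
  conv := by
    intro p hp q hq a b ha hb hab
    have := h.conv hp hq ha hb hab
    simpa using this
  symm := fun p hp => by simpa using h.symm _ hp
  sq := fun u v hu hv => h.sq v u hv hu
  dia := fun p hp => by simpa [add_comm] using h.dia _ hp

theorem sec_nonneg (Q : Set (ℝ × ℝ)) (u : ℝ) : 0 ≤ sec Q u := measureReal_nonneg

theorem sec_cpt {Q : Set (ℝ × ℝ)} (h : IsCompact Q) (u : ℝ) : IsCompact (Prod.mk u ⁻¹' Q) := by
  have : Topology.IsClosedEmbedding (Prod.mk u : ℝ → ℝ × ℝ) := by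
    refine Topology.IsClosedEmbedding.of_continuous_injective_isClosedMap (by fun_prop) (fun a b hab => by simpa using hab) ?_
    intro s hs
    have : Prod.mk u '' s = {u} ×ˢ s := by ext ⟨a, b⟩; simp [eq_comm, and_comm]
    rw [this]
    exact isClosed_singleton.prod hs
  exact this.isCompact_preimage h

theorem sec_concave {Q : Set (ℝ × ℝ)} (hc : IsCompact Q) (hv : Convex ℝ Q) {u1 u2 a b : ℝ}
    (ha : 0 ≤ a) (hb : 0 ≤ b) (hab : a + b = 1) (h1 : (Prod.mk u1 ⁻¹' Q).Nonempty)
    (h2 : (Prod.mk u2 ⁻¹' Q).Nonempty) :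
    a * sec Q u1 + b * sec Q u2 ≤ sec Q (a * u1 + b * u2) := by
  have aux : ∀ u, (Prod.mk u ⁻¹' Q).Nonempty → ∃ l r, l ≤ r ∧ (u, l) ∈ Q ∧ (u, r) ∈ Q ∧ sec Q u ≤ r - l := by
    intro u hu
    obtain ⟨l, hl⟩ := (sec_cpt hc u).exists_isLeast hu
    obtain ⟨r, hr⟩ := (sec_cpt hc u).exists_isGreatest hu
    refine ⟨l, r, hl.2 hr.1, hl.1, hr.1, ?_⟩
    have : volume.real (Prod.mk u ⁻¹' Q) ≤ volume.real (Icc l r) :=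
      measureReal_mono (fun x hx => ⟨hl.2 hx, hr.2 hx⟩) (by simp)
    rwa [Real.volume_real_Icc_of_le (hl.2 hr.1)] at this
  obtain ⟨l1, r1, hlr1, hl1, hr1, hs1⟩ := aux u1 h1
  obtain ⟨l2, r2, hlr2, hl2, hr2, hs2⟩ := aux u2 h2
  have hl := hv hl1 hl2 ha hb hab
  have hr := hv hr1 hr2 ha hb hab
  simp only [Prod.smul_mk, Prod.mk_add_mk, smul_eq_mul] at hl hr
  have hlr : a * l1 + b * l2 ≤ a * r1 + b * r2 := by gcongr
  have hsub : Icc (a * l1 + b * l2) (a * r1 + b * r2) ⊆ Prod.mk (a * u1 + b * u2) ⁻¹' Q := by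
    have hcv : Convex ℝ (Prod.mk (a * u1 + b * u2) ⁻¹' Q) := by
      intro x hx y hy c d hc hd hcd
      have := hv hx hy hc hd hcd
      simp only [Prod.smul_mk, Prod.mk_add_mk, smul_eq_mul, ← add_mul, hcd, one_mul] at this
      exact this
    exact hcv.ordConnected.out hl hr
  have := measureReal_mono (μ := volume) hsub (sec_cpt hc _).measure_lt_top.ne
  rw [Real.volume_real_Icc_of_le hlr] at this
  change _ ≤ sec Q _ at this
  nlinarith

theorem sec_even {Q : Set (ℝ × ℝ)} (h : Pos Q) (u : ℝ) : sec Q (-u) = sec Q u := by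
  have : Prod.mk (-u) ⁻¹' Q = -(Prod.mk u ⁻¹' Q) := by
    ext v
    simp only [mem_preimage, Set.mem_neg]
    constructor
    · intro hv; simpa using h.symm _ hv
    · intro hv; simpa using h.symm _ hv
  unfold sec
  rw [this, measureReal_def, Measure.measure_neg, ← measureReal_def]

theorem sec_le {Q : Set (ℝ × ℝ)} (h : Pos Q) {u : ℝ} (hu : 0 ≤ u) (hu2 : u ≤ 2) :
    sec Q u ≤ 4 - 2 * u := by
  have : volume.real (Prod.mk u ⁻¹' Q) ≤ volume.real (Icc (-(2 - u)) (2 - u)) := by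
    refine measureReal_mono (fun x hx => ?_) (by simp)
    have := h.dia _ hx
    simp only [abs_of_nonneg hu] at this
    exact abs_le.1 (by linarith)
  rw [Real.volume_real_Icc_of_le (by linarith)] at this
  unfold sec; linarith

theorem sec_zero {Q : Set (ℝ × ℝ)} (h : Pos Q) {u : ℝ} (hu : 2 < u) : sec Q u = 0 := by
  have : Prod.mk u ⁻¹' Q = ∅ := by
    ext v
    simp only [mem_preimage, mem_empty_iff_false, iff_false]
    intro hv
    have := h.dia _ hv
    have h3 := abs_nonneg v
    simp only [abs_of_pos (by linarith : 0 < u)] at this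
    linarith
  simp [sec, this]

theorem sec_ge {Q : Set (ℝ × ℝ)} (h : Pos Q) {u : ℝ} (hu : |u| ≤ 1) : 2 ≤ sec Q u := by
  have : volume.real (Icc (-1 : ℝ) 1) ≤ volume.real (Prod.mk u ⁻¹' Q) :=
    measureReal_mono (fun x hx => h.sq u x hu (abs_le.2 hx)) (sec_cpt h.cpt _).measure_lt_top.ne
  rw [Real.volume_real_Icc_of_le (by norm_num)] at this
  unfold sec; linarith

theorem sec_meas {Q : Set (ℝ × ℝ)} (h : Pos Q) : Measurable (sec Q) :=
  (measurable_measure_prodMk_left h.cpt.measurableSet).ennreal_toReal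

theorem sec_int {Q : Set (ℝ × ℝ)} (h : Pos Q) (a b : ℝ) (ha : 0 ≤ a) (hb : b ≤ 2) (hab : a ≤ b) :
    IntervalIntegrable (sec Q) volume a b := by
  rw [intervalIntegrable_iff_integrableOn_Ioc_of_le hab]
  refine Measure.integrableOn_of_bounded (M := 4) (by simp) (sec_meas h).aestronglyMeasurable ?_
  filter_upwards [ae_restrict_mem measurableSet_Ioc] with x hx
  rw [Real.norm_of_nonneg (sec_nonneg _ _)]
  linarith [sec_le h (u := x) (by linarith [hx.1]) (by linarith [hx.2]), hx.1]

theorem int_fst {Q : Set (ℝ × ℝ)} (h : Pos Q) (F : ℝ → ℝ)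
    (hF : IntegrableOn (fun p : ℝ × ℝ => F |p.1|) Q) :
    ∫ p in Q, F |p.1| = 2 * ∫ u in (0:ℝ)..2, F u * sec Q u := by
  have h1 : ∫ p in Q, F |p.1| = ∫ u, F |u| * sec Q |u| := by
    rw [← integral_indicator h.cpt.measurableSet, Measure.volume_eq_prod, integral_prod _
      ((integrable_indicator_iff h.cpt.measurableSet).2 hF)]
    congr 1
    ext u
    have : ∀ v, Q.indicator (fun p : ℝ × ℝ => F |p.1|) (u, v) =
        (Prod.mk u ⁻¹' Q).indicator (fun _ => F |u|) v := fun v => rfl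
    simp only [this]
    rw [integral_indicator_const _ (sec_cpt h.cpt u).measurableSet, smul_eq_mul, mul_comm]
    congr 1
    rcases abs_choice u with hh | hh <;> rw [hh]
    · rfl
    · rw [sec_even h]; rfl
  rw [h1, integral_comp_abs (f := fun u => F u * sec Q u),
    intervalIntegral.integral_of_le (by norm_num)]
  congr 1
  apply setIntegral_eq_of_subset_of_forall_sdiff_eq_zero measurableSet_Ioi (fun x hx => hx.1)
  intro x hx
  rw [sec_zero h, mul_zero]
  by_contra hh
  exact hx.2 ⟨hx.1, not_lt.1 hh⟩

theorem split02 {Q : Set (ℝ × ℝ)} (h : Pos Q) (F : ℝ → ℝ) (hF : Continuous F) :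
    ∫ p in Q, F |p.1| = 2 * ((∫ u in (0:ℝ)..1, F u * sec Q u) + ∫ u in (1:ℝ)..2, F u * sec Q u) := by
  rw [int_fst h F (Continuous.continuousOn (by fun_prop) |>.integrableOn_compact h.cpt)]
  rw [intervalIntegral.integral_add_adjacent_intervals]
  · exact (sec_int h 0 1 le_rfl (by norm_num) (by norm_num)).continuousOn_mul hF.continuousOn
  · exact (sec_int h 1 2 (by norm_num) (by norm_num) (by norm_num)).continuousOn_mul hF.continuousOn

theorem vol_in {Q : Set (ℝ × ℝ)} (h : Pos Q) :
    volume.real (Q ∩ {p | |p.1| ≤ 1}) = 2 * ∫ u in (0:ℝ)..1, sec Q u := by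
  have hm : MeasurableSet {p : ℝ × ℝ | |p.1| ≤ 1} := (isClosed_le (by fun_prop) (by fun_prop)).measurableSet
  have hms := h.cpt.measurableSet
  have key := int_fst h ((Iic (1:ℝ)).indicator 1) (by
    refine Measure.integrableOn_of_bounded (M := 1) h.cpt.measure_lt_top.ne ?_ ?_
    · exact (((measurable_const (a := (1:ℝ))).indicator measurableSet_Iic).comp
        (by fun_prop : Measurable fun p : ℝ × ℝ => |p.1|)).aestronglyMeasurable
    · refine Filter.Eventually.of_forall fun p => ?_
      by_cases hp : |p.1| ≤ 1 <;> simp [indicator, hp])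
  have e : (fun p : ℝ × ℝ => (Iic (1:ℝ)).indicator (1 : ℝ → ℝ) |p.1|) =
      {p : ℝ × ℝ | |p.1| ≤ 1}.indicator 1 := by
    ext p; simp [indicator]
  rw [e, integral_indicator_one hm, measureReal_restrict_apply hm, inter_comm] at key
  rw [key]
  congr 1
  rw [intervalIntegral.integral_of_le (by norm_num), intervalIntegral.integral_of_le (by norm_num)]
  have e2 : (fun u => (Iic (1:ℝ)).indicator (1 : ℝ → ℝ) u * sec Q u) = (Iic (1:ℝ)).indicator (sec Q) := by
    ext p; by_cases hp : p ≤ 1 <;> simp [indicator, hp]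
  rw [e2, setIntegral_indicator measurableSet_Iic]
  congr 2
  ext x
  simp only [mem_inter_iff, mem_Ioc, mem_Iic]
  exact ⟨fun h => ⟨h.1.1, h.2⟩, fun h => ⟨⟨h.1, by linarith [h.2]⟩, h.2⟩⟩

theorem vol_eq {Q : Set (ℝ × ℝ)} (h : Pos Q) :
    volume.real Q = 2 * ((∫ u in (0:ℝ)..1, sec Q u) + ∫ u in (1:ℝ)..2, sec Q u) := by
  have := split02 h (fun _ => 1) continuous_const
  simpa using this

theorem vol_link {Q : Set (ℝ × ℝ)} (h : Pos Q) :
    ∫ u in (0:ℝ)..1, sec Q u = 2 + ∫ u in (1:ℝ)..2, sec (Prod.swap ⁻¹' Q) u := by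
  have hm2 : MeasurableSet {p : ℝ × ℝ | |p.2| ≤ 1} := (isClosed_le (by fun_prop) (by fun_prop)).measurableSet
  have a1 := vol_in h
  have a2 := vol_in h.swap
  have a3 := vol_eq h.swap
  have mp : MeasurePreserving (Prod.swap : ℝ × ℝ → ℝ × ℝ) := Measure.measurePreserving_swap
  have s1 : volume.real (Prod.swap ⁻¹' Q) = volume.real Q := by
    rw [measureReal_def, mp.measure_preimage h.cpt.measurableSet.nullMeasurableSet, ← measureReal_def]
  have s2 : volume.real (Prod.swap ⁻¹' Q ∩ {p : ℝ × ℝ | |p.1| ≤ 1}) = volume.real (Q ∩ {p | |p.2| ≤ 1}) := by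
    rw [measureReal_def, measureReal_def, ← mp.measure_preimage (h.cpt.measurableSet.inter hm2).nullMeasurableSet]
    rfl
  have s3 : volume.real (Q ∩ {p | |p.2| ≤ 1}) + volume.real (Q \ {p | |p.2| ≤ 1}) = volume.real Q :=
    measureReal_inter_add_sdiff hm2 h.cpt.measure_lt_top.ne
  have s4 : volume.real ((Q ∩ {p | |p.1| ≤ 1}) ∩ {p | |p.2| ≤ 1}) +
      volume.real ((Q ∩ {p | |p.1| ≤ 1}) \ {p | |p.2| ≤ 1}) = volume.real (Q ∩ {p | |p.1| ≤ 1}) :=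
    measureReal_inter_add_sdiff hm2 ((measure_mono inter_subset_left).trans_lt h.cpt.measure_lt_top).ne
  have s5 : (Q ∩ {p | |p.1| ≤ 1}) ∩ {p | |p.2| ≤ 1} = Icc (-1:ℝ) 1 ×ˢ Icc (-1:ℝ) 1 := by
    ext ⟨u, v⟩
    simp only [mem_inter_iff, mem_ofPred_eq, mem_prod, mem_Icc, ← abs_le]
    exact ⟨fun hh => ⟨hh.1.2, hh.2⟩, fun hh => ⟨⟨h.sq u v hh.1 hh.2, hh.1⟩, hh.2⟩⟩
  have s6 : (Q ∩ {p | |p.1| ≤ 1}) \ {p | |p.2| ≤ 1} = Q \ {p | |p.2| ≤ 1} := by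
    ext ⟨u, v⟩
    simp only [mem_inter_iff, mem_ofPred_eq, mem_sdiff]
    refine ⟨fun hh => ⟨hh.1.1, hh.2⟩, fun hh => ⟨⟨hh.1, ?_⟩, hh.2⟩⟩
    have := h.dia _ hh.1
    simp only at this
    linarith [not_le.1 hh.2]
  have s7 : volume.real (Icc (-1:ℝ) 1 ×ˢ Icc (-1:ℝ) 1) = 4 := by
    rw [Measure.volume_eq_prod, measureReal_prod_prod, Real.volume_real_Icc_of_le (by norm_num)]
    norm_num
  rw [s5, s6, s7] at s4
  linarith

theorem half_bound {Q : Set (ℝ × ℝ)} (h : Pos Q) (S T : ℝ)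
    (hS : ∫ u in (1:ℝ)..2, sec Q u = S) (hT : ∫ u in (1:ℝ)..2, sec (Prod.swap ⁻¹' Q) u = T) (hT0 : 0 ≤ T) :
    0 ≤ S ∧ S ≤ 1 ∧ ∫ p in Q, p.1 ^ 2 ≤ (4+2*T-T^2+6*S+4*S^2+S^3) / 3 := by
  have hi := inner_bound (sec Q) T (sec_int h 0 1 le_rfl (by norm_num) (by norm_num))
    (by rw [vol_link h, hT]) hT0 (fun t ht => sec_le h ht.1 (by linarith [ht.2])) (by
      intro t0 ht0 t ht htt
      have hne : ∀ u : ℝ, |u| ≤ 1 → (Prod.mk u ⁻¹' Q).Nonempty := fun u hu => ⟨0, h.sq u 0 hu (by simp)⟩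
      have h1 : |t| ≤ 1 := by rw [abs_of_nonneg ht.1]; exact ht.2
      have htp : 0 < t := by linarith [ht0.1]
      have := sec_concave h.cpt h.conv (u1 := t) (u2 := -t) (a := (t + t0) / (2 * t)) (b := (t - t0) / (2 * t))
        (div_nonneg (by linarith [ht0.1]) (by linarith)) (div_nonneg (by linarith [ht0.1]) (by linarith))
        (by field_simp; ring) (hne _ h1) (hne _ (by rwa [abs_neg]))
      rw [sec_even h, ← add_mul] at this
      have e1 : (t + t0) / (2 * t) + (t - t0) / (2 * t) = 1 := by field_simp; ring
      have e2 : (t + t0) / (2 * t) * t + (t - t0) / (2 * t) * -t = t0 := by field_simp; ring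
      rwa [e1, e2, one_mul] at this)
  have ho := outer_bound (sec Q) S (sec_int h 1 2 (by norm_num) (by norm_num) (by norm_num)) hS
    (sec_nonneg Q) (fun t ht => sec_le h (by linarith [ht.1]) ht.2) (by
      intro t0 ht0 t ht htt hpos
      have hne : (Prod.mk t ⁻¹' Q).Nonempty := by
        rw [nonempty_iff_ne_empty]
        intro he
        simp [sec, he] at hpos
      have ht1 : 0 < t - 1 := by linarith [ht0.1]
      have := sec_concave h.cpt h.conv (u1 := 1) (u2 := t) (a := (t - t0) / (t - 1)) (b := (t0 - 1) / (t - 1))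
        (div_nonneg (by linarith [ht0.1]) (by linarith)) (div_nonneg (by linarith [ht0.1]) (by linarith))
        (by field_simp; ring) ⟨0, h.sq 1 0 (by simp) (by simp)⟩ hne
      have e2 : (t - t0) / (t - 1) * 1 + (t0 - 1) / (t - 1) * t = t0 := by field_simp; ring
      rw [e2] at this
      have h2 := sec_ge h (u := 1) (by simp)
      have h3 : (t - t0) * sec Q 1 + (t0 - 1) * sec Q t ≤ (t - 1) * sec Q t0 := by
        have := mul_le_mul_of_nonneg_left this ht1.le
        have e3 : (t - 1) * ((t - t0) / (t - 1) * sec Q 1 + (t0 - 1) / (t - 1) * sec Q t) =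
          (t - t0) * sec Q 1 + (t0 - 1) * sec Q t := by field_simp
        rwa [e3] at this
      nlinarith)
  refine ⟨ho.1, ho.2.1, ?_⟩
  have := split02 h (fun u => u ^ 2) (by fun_prop)
  simp only [sq_abs] at this
  rw [this]
  linarith [hi.2, ho.2.2]

theorem core {Q : Set (ℝ × ℝ)} (h : Pos Q) :
    (∫ p in Q, p.1 ^ 2) * (∫ p in Q, p.2 ^ 2) ≤ volume.real Q ^ 4 / 144 := by
  have sw : (Prod.swap ⁻¹' (Prod.swap ⁻¹' Q) : Set (ℝ × ℝ)) = Q := by ext; simp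
  have n1 : 0 ≤ ∫ u in (1:ℝ)..2, sec Q u :=
    intervalIntegral.integral_nonneg one_le_two fun t _ => sec_nonneg _ t
  have n2 : 0 ≤ ∫ u in (1:ℝ)..2, sec (Prod.swap ⁻¹' Q) u :=
    intervalIntegral.integral_nonneg one_le_two fun t _ => sec_nonneg _ t
  obtain ⟨S0, S1, hA⟩ := half_bound h _ _ rfl rfl n2
  obtain ⟨T0, T1, hB⟩ := half_bound h.swap _ _ rfl (by rw [sw]) n1
  have mp : MeasurePreserving (Prod.swap : ℝ × ℝ → ℝ × ℝ) := Measure.measurePreserving_swap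
  have s1 : ∫ p in Prod.swap ⁻¹' Q, p.1 ^ 2 = ∫ p in Q, p.2 ^ 2 :=
    mp.setIntegral_preimage_emb MeasurableEquiv.prodComm.measurableEmbedding (fun p => p.2 ^ 2) Q
  rw [s1] at hB
  have hv := vol_eq h
  rw [vol_link h] at hv
  set S := ∫ u in (1:ℝ)..2, sec Q u
  set T := ∫ u in (1:ℝ)..2, sec (Prod.swap ⁻¹' Q) u
  have hp := poly_ineq S T S0 T0 S1 T1
  have p1 : 0 ≤ ∫ p in Q, p.2 ^ 2 := integral_nonneg fun p => sq_nonneg _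
  have p2 : 0 ≤ 4+2*T-T^2+6*S+4*S^2+S^3 := by nlinarith [pow_nonneg S0 3]
  have := mul_le_mul hA hB p1 (by positivity)
  rw [hv]
  have e : (2 * (2 + T + S)) ^ 4 / 144 = (2 + S + T) ^ 4 / 9 := by ring
  rw [e]
  refine this.trans ?_
  linarith

abbrev E2 := EuclideanSpace ℝ (Fin 2)

def det2 (x y : E2) : ℝ := x 0 * y 1 - x 1 * y 0

def Lin (x y : E2) : E2 →ₗ[ℝ] E2 where
  toFun p := p 0 • x + p 1 • y
  map_add' p q := by simp [add_smul]; abel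
  map_smul' c p := by simp [mul_smul]

theorem Lin_apply (x y p : E2) : Lin x y p = p 0 • x + p 1 • y := rfl

theorem det_Lin (x y : E2) : LinearMap.det (Lin x y) = det2 x y := by
  rw [← LinearMap.det_toMatrix (EuclideanSpace.basisFun (Fin 2) ℝ).toBasis, Matrix.det_fin_two]
  simp [LinearMap.toMatrix_apply, Lin_apply, det2]
  ring

theorem det2_map (L : E2 →ₗ[ℝ] E2) (x y : E2) : det2 (L x) (L y) = LinearMap.det L * det2 x y := by
  rw [← det_Lin, ← det_Lin, ← LinearMap.det_comp]
  congr 1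
  ext p
  simp [Lin_apply]

def toP (p : E2) : ℝ × ℝ := (p 0, p 1)

theorem toP_mp : MeasurePreserving toP ∧ MeasurableEmbedding toP := by
  have h1 := EuclideanSpace.volume_preserving_symm_measurableEquiv_toLp (Fin 2)
  have h2 := h1.trans (volume_preserving_finTwoArrow ℝ)
  have e : (toP : E2 → ℝ × ℝ) = ((MeasurableEquiv.toLp 2 (Fin 2 → ℝ)).symm.trans (MeasurableEquiv.finTwoArrow (α := ℝ))) := by
    ext p <;> rfl
  rw [e]
  exact ⟨h2, MeasurableEquiv.measurableEmbedding _⟩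

def cube : Set E2 := {x | ∀ i, x i ∈ Set.Icc (-1 : ℝ) 1}

theorem cube_eq : cube = toP ⁻¹' (Icc (-1:ℝ) 1 ×ˢ Icc (-1:ℝ) 1) := by
  ext p
  simp only [cube, mem_ofPred_eq, mem_preimage, mem_prod, toP, Fin.forall_fin_two]

theorem cube_vol : volume.real cube = 4 := by
  rw [cube_eq, measureReal_def, toP_mp.1.measure_preimage
    (measurableSet_Icc.prod measurableSet_Icc).nullMeasurableSet, ← measureReal_def]
  rw [Measure.volume_eq_prod, measureReal_prod_prod, Real.volume_real_Icc_of_le (by norm_num)]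
  norm_num

def diam : Set E2 := {p | |p 0| + |p 1| ≤ 1}

theorem diam_vol : volume.real diam = 2 := by
  have hd : LinearMap.det (Lin (!₂[1,1]) (!₂[1,-1])) = -2 := by
    rw [det_Lin]; simp [det2]; norm_num
  have : diam = (Lin (!₂[1,1]) (!₂[1,-1])) ⁻¹' cube := by
    ext p
    simp only [diam, cube, mem_ofPred_eq, mem_preimage, Fin.forall_fin_two, Lin_apply]
    simp only [PiLp.add_apply, PiLp.smul_apply, smul_eq_mul, mem_Icc]
    simp
    constructor
    · intro h
      have := le_abs_self (p 0)
      have := le_abs_self (p 1)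
      have := neg_abs_le (p 0)
      have := neg_abs_le (p 1)
      refine ⟨⟨?_, ?_⟩, ?_, ?_⟩ <;> linarith
    · rintro ⟨⟨h1, h2⟩, h3, h4⟩
      rcases abs_cases (p 0) with h | h <;> rcases abs_cases (p 1) with h' | h' <;> linarith
  rw [this, measureReal_def, Measure.addHaar_preimage_linearMap _ (by rw [hd]; norm_num), hd,
    ENNReal.toReal_mul, ← measureReal_def, cube_vol]
  norm_num

theorem hull_eq (x : Fin 2 → E2) :
    convexHull ℝ (Set.range x ∪ -Set.range x) = Lin (x 0) (x 1) '' diam := by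
  apply Subset.antisymm
  · apply convexHull_min
    · rintro y (⟨i, rfl⟩ | hy)
      · fin_cases i
        · exact ⟨!₂[1, 0], by simp [diam], by simp [Lin_apply]⟩
        · exact ⟨!₂[0, 1], by simp [diam], by simp [Lin_apply]⟩
      · obtain ⟨i, hi⟩ := hy
        rw [eq_neg_iff_add_eq_zero, add_comm, ← eq_neg_iff_add_eq_zero] at hi
        subst hi
        fin_cases i
        · exact ⟨!₂[-1, 0], by simp [diam], by simp [Lin_apply]⟩
        · exact ⟨!₂[0, -1], by simp [diam], by simp [Lin_apply]⟩
    · apply Convex.linear_image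
      intro p hp q hq a b ha hb hab
      simp only [diam, mem_ofPred_eq] at *
      simp only [PiLp.add_apply, PiLp.smul_apply, smul_eq_mul]
      have h1 := abs_add_le (a * p 0) (b * q 0)
      have h2 := abs_add_le (a * p 1) (b * q 1)
      rw [abs_mul, abs_mul, abs_of_nonneg ha, abs_of_nonneg hb] at h1 h2
      nlinarith
  · rintro _ ⟨p, hp, rfl⟩
    simp only [diam, mem_ofPred_eq] at hp
    have hc := convex_convexHull ℝ (Set.range x ∪ -Set.range x)
    have m : ∀ i, x i ∈ convexHull ℝ (Set.range x ∪ -Set.range x) := fun i =>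
      subset_convexHull _ _ (Or.inl ⟨i, rfl⟩)
    have m' : ∀ i, - x i ∈ convexHull ℝ (Set.range x ∪ -Set.range x) := fun i =>
      subset_convexHull _ _ (Or.inr ⟨i, by simp⟩)
    have seg : ∀ i, ∀ c : ℝ, |c| ≤ 1 → c • x i ∈ convexHull ℝ (Set.range x ∪ -Set.range x) := by
      intro i c hcc
      have h := abs_le.1 hcc
      have := hc (m i) (m' i) (a := (1 + c) / 2) (b := (1 - c) / 2) (by linarith) (by linarith) (by ring)
      convert this using 1
      module
    rw [Lin_apply]
    rcases (abs_nonneg (p 0)).eq_or_lt with h0 | h0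
    · have : p 0 = 0 := abs_eq_zero.1 h0.symm
      rw [this, zero_smul, zero_add]
      exact seg 1 _ (by linarith)
    by_cases h1 : |p 0| = 1
    · have : p 1 = 0 := by
        have := abs_nonneg (p 1)
        exact abs_eq_zero.1 (by linarith)
      rw [this, zero_smul, add_zero]
      exact seg 0 _ (by linarith)
    have h1' : |p 0| < 1 := lt_of_le_of_ne (by linarith [abs_nonneg (p 1)]) h1
    have a1 := seg 0 (p 0 / |p 0|) (by rw [abs_div, abs_abs, div_self h0.ne'])
    have a2 := seg 1 (p 1 / (1 - |p 0|)) (by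
      rw [abs_div, abs_of_pos (by linarith : 0 < 1 - |p 0|), div_le_one (by linarith)]; linarith)
    have := hc a1 a2 h0.le (by linarith : 0 ≤ 1 - |p 0|) (by ring)
    rwa [smul_smul, smul_smul, mul_div_cancel₀ _ h0.ne', mul_div_cancel₀ _ (by linarith : 1 - |p 0| ≠ 0)] at this

theorem hull_vol (x : Fin 2 → E2) :
    (volume (convexHull ℝ (Set.range x ∪ -Set.range x))).toReal = 2 * |det2 (x 0) (x 1)| := by
  rw [hull_eq, Measure.addHaar_image_linearMap, ENNReal.toReal_mul, ← measureReal_def, diam_vol, det_Lin,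
    ENNReal.toReal_ofReal (abs_nonneg _), mul_comm]

def DD (K : Set E2) : ℝ := ∫ x in K, ∫ y in K, det2 x y ^ 2

theorem momentV_eq (K : Set E2) (hK : IsCompact K) :
    momentV 2 2 K 2 = 4 * DD K / volume.real K ^ 4 := by
  have h1 : ∫ x : Fin 2 → E2 in {x | ∀ i, x i ∈ K}, det2 (x 0) (x 1) ^ 2 = DD K := by
    have mp := volume_preserving_finTwoArrow E2
    have := mp.setIntegral_preimage_emb (MeasurableEquiv.measurableEmbedding _) (fun z : E2 × E2 => det2 z.1 z.2 ^ 2) (K ×ˢ K)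
    have e : (MeasurableEquiv.finTwoArrow (α := E2)) ⁻¹' (K ×ˢ K) = {x | ∀ i, x i ∈ K} := by
      ext x; simp [Fin.forall_fin_two]
    rw [e] at this
    refine Eq.trans this ?_
    rw [Measure.volume_eq_prod, setIntegral_prod]
    · rfl
    · refine ContinuousOn.integrableOn_compact (hK.prod hK) (Continuous.continuousOn ?_)
      unfold det2; fun_prop
  unfold momentV
  simp only [hull_vol]
  simp only [Real.rpow_two, ← measureReal_def, div_pow, mul_pow, sq_abs]
  rw [integral_div, integral_const_mul, h1]
  rw [div_div, ← pow_add]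
  norm_num

theorem DD_image (L : E2 →ₗ[ℝ] E2) (hL : LinearMap.det L ≠ 0) (K : Set E2) (hK : MeasurableSet K) :
    DD (L '' K) = LinearMap.det L ^ 4 * DD K := by
  have hinj : Function.Injective L := (LinearMap.equivOfDetNeZero L hL).injective
  have key : ∀ g : E2 → ℝ, ∫ x in L '' K, g x = |LinearMap.det L| * ∫ x in K, g (L x) := by
    intro g
    have := integral_image_eq_integral_abs_det_fderiv_smul (μ := volume) (f := L) (f' := fun _ => LinearMap.toContinuousLinearMap L) hK
      (fun x _ => (LinearMap.toContinuousLinearMap L).hasFDerivWithinAt) hinj.injOn g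
    simp only [smul_eq_mul] at this
    rw [this, integral_const_mul]
    congr 2
  unfold DD
  simp only [key, det2_map, mul_pow]
  rw [integral_const_mul]
  simp only [integral_const_mul]
  have : |LinearMap.det L| * |LinearMap.det L| = LinearMap.det L ^ 2 := by rw [← sq, sq_abs]
  calc _ = (|LinearMap.det L| * |LinearMap.det L|) * LinearMap.det L ^ 2 * ∫ x in K, ∫ y in K, det2 x y ^ 2 := by ring
    _ = _ := by rw [this]; ring

theorem momentV_image (L : E2 →ₗ[ℝ] E2) (hL : LinearMap.det L ≠ 0) (K : Set E2) (hK : IsCompact K) :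
    momentV 2 2 (L '' K) 2 = momentV 2 2 K 2 := by
  have hLK : IsCompact (L '' K) := hK.image L.continuous_of_finiteDimensional
  rw [momentV_eq _ hLK, momentV_eq _ hK, DD_image L hL K hK.measurableSet]
  have : volume.real (L '' K) = |LinearMap.det L| * volume.real K := by
    rw [measureReal_def, Measure.addHaar_image_linearMap, ENNReal.toReal_mul,
      ENNReal.toReal_ofReal (abs_nonneg _), measureReal_def]
  rw [this, mul_pow, show |LinearMap.det L| ^ 4 = LinearMap.det L ^ 4 from Even.pow_abs (by decide) _]
  have := pow_ne_zero 4 hL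
  rw [mul_left_comm, mul_div_mul_left _ _ this]

theorem DD_eq (K : Set E2) (hK : IsCompact K) :
    DD K = 2 * ((∫ x in K, x 0 ^ 2) * (∫ x in K, x 1 ^ 2) - (∫ x in K, x 0 * x 1) ^ 2) := by
  have hi : ∀ g : E2 → ℝ, Continuous g → IntegrableOn g K := fun g hg =>
    hg.continuousOn.integrableOn_compact hK
  have h1 : ∀ x : E2, ∫ y in K, det2 x y ^ 2 = x 0 ^ 2 * (∫ y in K, y 1 ^ 2)
      - x 0 * x 1 * (2 * ∫ y in K, y 0 * y 1) + x 1 ^ 2 * ∫ y in K, y 0 ^ 2 := by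
    intro x
    have e : ∀ y, det2 x y ^ 2 = x 0 ^ 2 * y 1 ^ 2 - x 0 * x 1 * (2 * (y 0 * y 1)) + x 1 ^ 2 * y 0 ^ 2 :=
      fun y => by unfold det2; ring
    simp only [e]
    rw [integral_add (hi _ (by fun_prop)) (hi _ (by fun_prop)), integral_sub (hi _ (by fun_prop)) (hi _ (by fun_prop))]
    simp only [integral_const_mul]
  unfold DD
  simp only [h1]
  rw [integral_add (hi _ (by fun_prop)) (hi _ (by fun_prop)), integral_sub (hi _ (by fun_prop)) (hi _ (by fun_prop))]
  simp only [integral_mul_const]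
  ring

theorem cube_cpt : IsCompact cube := by
  have := (isCompact_univ_pi (fun _ : Fin 2 => isCompact_Icc (a := (-1:ℝ)) (b := 1)))
  have h2 := this.image (PiLp.continuous_toLp 2 (fun _ : Fin 2 => ℝ))
  convert h2 using 1
  ext p
  simp only [cube, mem_ofPred_eq, mem_image, mem_univ_pi]
  exact ⟨fun h => ⟨WithLp.ofLp p, h, rfl⟩, by rintro ⟨q, hq, rfl⟩; exact hq⟩

theorem momentV_cube : momentV 2 2 cube 2 = 1 / 18 := by
  rw [momentV_eq _ cube_cpt, DD_eq _ cube_cpt, cube_vol]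
  have key : ∀ f g : ℝ → ℝ, ∫ x in cube, f (x 0) * g (x 1) =
      (∫ t in (-1:ℝ)..1, f t) * ∫ t in (-1:ℝ)..1, g t := by
    intro f g
    rw [cube_eq]
    refine (toP_mp.1.setIntegral_preimage_emb toP_mp.2 (fun z => f z.1 * g z.2) _).trans ?_
    rw [Measure.volume_eq_prod, setIntegral_prod_mul, intervalIntegral.integral_of_le (by norm_num),
      intervalIntegral.integral_of_le (by norm_num), integral_Icc_eq_integral_Ioc, integral_Icc_eq_integral_Ioc]
  have k1 := key (fun t => t ^ 2) (fun _ => 1)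
  have k2 := key (fun _ => 1) (fun t => t ^ 2)
  have k3 := key (fun t => t) (fun t => t)
  simp only [mul_one, one_mul] at k1 k2
  rw [k1, k2, k3]
  simp only [integral_pow, integral_id, intervalIntegral.integral_const]
  norm_num

theorem bound_of_pos (K : Set E2) (hK : IsCompact K) (Q : Set (ℝ × ℝ)) (hQ : Pos Q) (h : K = toP ⁻¹' Q) :
    momentV 2 2 K 2 ≤ 1 / 18 := by
  have hv : volume.real K = volume.real Q := by
    rw [h, measureReal_def, toP_mp.1.measure_preimage hQ.cpt.measurableSet.nullMeasurableSet, measureReal_def]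
  have h0 : ∫ x in K, x 0 ^ 2 = ∫ p in Q, p.1 ^ 2 := by
    rw [h]; exact toP_mp.1.setIntegral_preimage_emb toP_mp.2 (fun p => p.1 ^ 2) Q
  have h1 : ∫ x in K, x 1 ^ 2 = ∫ p in Q, p.2 ^ 2 := by
    rw [h]; exact toP_mp.1.setIntegral_preimage_emb toP_mp.2 (fun p => p.2 ^ 2) Q
  have hc := core hQ
  rw [momentV_eq _ hK, DD_eq _ hK, h0, h1, hv]
  have hpos : 0 ≤ volume.real Q ^ 4 := by positivity
  rcases hpos.eq_or_lt with hz | hp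
  · rw [← hz]; norm_num
  rw [div_le_iff₀ hp]
  nlinarith [sq_nonneg (∫ x in K, x 0 * x 1)]

/-- For every symmetric convex body `K ⊆ ℝ²` one has `𝔼 V_{K,2}² ≤ 1/18`, with equality
when `K` is a symmetric parallelogram.  Equivalently, the isotropic constant
`L_K = (1/2)(2! 𝔼 V_{K,2}²)^{1/4}` satisfies `L_K ≤ L_𝒫 = 12^{-1/2}`. -/
theorem momentV_sq_le_one_div_eighteen
    (K : Set (EuclideanSpace ℝ (Fin 2))) (hK : IsSymConvexBody K) :
    momentV 2 2 K 2 ≤ 1 / 18 ∧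
      ∀ (L : EuclideanSpace ℝ (Fin 2) ≃ₗ[ℝ] EuclideanSpace ℝ (Fin 2))
        (P : Set (EuclideanSpace ℝ (Fin 2))),
        P = L '' {x | ∀ i, x i ∈ Set.Icc (-1 : ℝ) 1} → momentV 2 2 P 2 = 1 / 18 := by
  constructor
  · obtain ⟨hc, hcv, hint, hsym⟩ := hK
    have hneg : ∀ x ∈ K, -x ∈ K := fun x hx => by rw [hsym]; simpa using hx
    obtain ⟨x0, hx0⟩ := hint
    have hne : (K ×ˢ K).Nonempty := ⟨(x0, x0), interior_subset hx0, interior_subset hx0⟩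
    obtain ⟨⟨p, q⟩, ⟨hp, hq⟩, hmax⟩ := (hc.prod hc).exists_isMaxOn hne
      (f := fun z : E2 × E2 => det2 z.1 z.2) (by unfold det2; fun_prop)
    have hmax' : ∀ x ∈ K, ∀ y ∈ K, det2 x y ≤ det2 p q := fun x hx y hy => hmax (mk_mem_prod hx hy)
    have habs : ∀ x ∈ K, ∀ y ∈ K, |det2 x y| ≤ det2 p q := by
      intro x hx y hy
      rw [abs_le]
      have := hmax' _ (hneg x hx) y hy
      have e : det2 (-x) y = - det2 x y := by simp [det2]; ring
      exact ⟨by linarith, hmax' x hx y hy⟩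
    have hd : 0 < det2 p q := by
      obtain ⟨ε, hε, hb⟩ := Metric.isOpen_iff.1 isOpen_interior x0 hx0
      have hmem : ∀ w : E2, ‖w‖ = 1 → x0 + (ε / 2) • w ∈ K := by
        intro w hw
        apply interior_subset; apply hb
        rw [Metric.mem_ball, dist_eq_norm, add_sub_cancel_left, norm_smul, hw, Real.norm_of_nonneg (by linarith)]
        linarith
      have hx : x0 ∈ K := interior_subset hx0
      have e0 := hmem (EuclideanSpace.single 0 1) (by simp)
      have e1 := hmem (EuclideanSpace.single 1 1) (by simp)
      have b1 := abs_le.1 (habs _ e0 _ e1)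
      have b2 := abs_le.1 (habs _ e0 _ hx)
      have b3 := abs_le.1 (habs _ hx _ e1)
      simp [det2] at b1 b2 b3
      change 0 < p.ofLp 0 * q.ofLp 1 - p.ofLp 1 * q.ofLp 0
      nlinarith [mul_pos hε hε]
    set L := Lin ((1 / 2 : ℝ) • (p + q)) ((1 / 2 : ℝ) • (p - q)) with hLdef
    have hLa : ∀ z, L z = ((z 0 + z 1) / 2) • p + ((z 0 - z 1) / 2) • q := by
      intro z; rw [hLdef, Lin_apply]; module
    have hdet : LinearMap.det L ≠ 0 := by
      rw [hLdef, det_Lin]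
      have : det2 ((1 / 2 : ℝ) • (p + q)) ((1 / 2 : ℝ) • (p - q)) = - det2 p q / 2 := by
        simp [det2]; ring
      rw [this]; intro h; linarith
    let e := LinearMap.equivOfDetNeZero L hdet
    have he : ∀ z, e z = L z := fun z => rfl
    have hLc : Continuous L := L.continuous_of_finiteDimensional
    have hec : Continuous e.symm := e.symm.toLinearMap.continuous_of_finiteDimensional
    set K' : Set E2 := L ⁻¹' K with hK'
    have hKim : K = L '' K' := by
      rw [hK', image_preimage_eq]; exact e.surjective
    have hK'c : IsCompact K' := by
      have : K' = e.symm '' K := by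
        ext z
        simp only [hK', mem_preimage, mem_image]
        constructor
        · intro h; exact ⟨L z, h, by rw [← he]; simp⟩
        · rintro ⟨y, hy, rfl⟩; rw [← he]; simpa using hy
      rw [this]; exact hc.image hec
    rw [hKim, momentV_image L hdet K' hK'c]
    let r : ℝ × ℝ → E2 := fun z => !₂[z.1, z.2]
    have hrL : ∀ u v : ℝ, L (r (u, v)) = ((u + v) / 2) • p + ((u - v) / 2) • q := by
      intro u v; rw [hLa]; simp [r]
    have hrt : ∀ z, r (toP z) = z := by
      intro z; ext i; fin_cases i <;> rfl
    have htr : ∀ z, toP (r z) = z := fun z => rfl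
    have hct : Continuous toP := by unfold toP; fun_prop
    refine bound_of_pos K' hK'c (toP '' K') ?_ ?_
    · refine ⟨hK'c.image hct, ?_, ?_, ?_, ?_⟩
      · rintro _ ⟨x, hx, rfl⟩ _ ⟨y, hy, rfl⟩ a b ha hb hab
        refine ⟨a • x + b • y, ?_, ?_⟩
        · change L _ ∈ K
          rw [map_add, map_smul, map_smul]
          exact hcv hx hy ha hb hab
        · simp [toP]
      · rintro _ ⟨x, hx, rfl⟩
        refine ⟨-x, ?_, by simp [toP]⟩
        change L _ ∈ K
        rw [map_neg]; exact hneg _ hx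
      · intro u v hu hv
        refine ⟨r (u, v), ?_, htr _⟩
        change L _ ∈ K
        rw [hrL]
        -- convex combination of p, -p, q, -q
        have hu' := abs_le.1 hu
        have hv' := abs_le.1 hv
        have m1 : (((1 + v) / 2) • p + ((1 - v) / 2) • q) ∈ K :=
          hcv hp hq (by linarith) (by linarith) (by ring)
        have m2 : (((1 - v) / 2) • (-p) + ((1 + v) / 2) • (-q)) ∈ K :=
          hcv (hneg p hp) (hneg q hq) (by linarith) (by linarith) (by ring)
        have := hcv m1 m2 (a := (1 + u) / 2) (b := (1 - u) / 2) (by linarith) (by linarith) (by ring)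
        convert this using 1
        module
      · rintro _ ⟨z, hz, rfl⟩
        have hz' : L z ∈ K := hz
        have c1 := habs _ hz' _ hq
        have c2 := habs _ hp _ hz'
        rw [hLa] at c1 c2
        have e1 : det2 (((z 0 + z 1) / 2) • p + ((z 0 - z 1) / 2) • q) q = (z 0 + z 1) / 2 * det2 p q := by
          simp [det2]; ring
        have e2 : det2 p (((z 0 + z 1) / 2) • p + ((z 0 - z 1) / 2) • q) = (z 0 - z 1) / 2 * det2 p q := by
          simp [det2]; ring
        rw [e1, abs_mul, abs_of_pos hd] at c1
        rw [e2, abs_mul, abs_of_pos hd] at c2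
        have d1 := abs_le.1 (le_of_mul_le_mul_right (c1.trans_eq (one_mul _).symm) hd)
        have d2 := abs_le.1 (le_of_mul_le_mul_right (c2.trans_eq (one_mul _).symm) hd)
        change |z 0| + |z 1| ≤ 2
        rcases abs_cases (z 0) with h | h <;> rcases abs_cases (z 1) with h' | h' <;> linarith
    · refine (preimage_image_eq _ ?_).symm
      intro a b hab
      rw [← hrt a, hab, hrt]
  · rintro L P rfl
    have := momentV_image L.toLinearMap (LinearEquiv.isUnit_det' L).ne_zero cube cube_cpt
    rw [momentV_cube] at this
    exact this
end
end
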